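/- arXiv:math/0206211 — 7 statements merged into one kernel-verified Lean document; each statement's English description precedes it below -/
import Mathlib

section
/- Let R be a division ring, n ≥ 2, and A = (a_{pq}) an n×n matrix over R. Fix row indices i ≠ s and column indices j ≠ ℓ. Assume the submatrices A^{ij} and A^{iℓ} are invertible (so that |A|_{ij} and |A|_{iℓ} are defined) and that the quasideterminants |A^{iℓ}|_{sj} and |A^{ij}|_{sℓ} are defined and invertible in R. Then the row homological relation holds: −|A|_{ij} · (|A^{iℓ}|_{sj})^{−1} = |A|_{iℓ} · (|A^{ij}|_{sℓ})^{−1}. -/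
/-!
The quasideterminant `|M|_{ij}` describes column vectors `u` for which `M u` is supported on
row `i`: for these, `(M u)_i = |M|_{ij} u_j` (`qdet_mul_of_ker`), and such a `u` with `u_j = 1`
exists (`exists_qdet_vector`).

Put `x = |A^{iℓ}|_{sj}` and `y = |A^{ij}|_{sℓ}`. Existence for the two minors, followed by
extension by zero, gives vectors `w`, `w'` with `w_j = 1`, `w_ℓ = 0`, `w'_j = 0`, `w'_ℓ = 1`, such
that, outside row `i`, `A w` and `A w'` are `x` and `y` times the standard vector at `s`.
Hence `A u` with `u = w' - w x⁻¹ y` is supported on row `i`. Evaluating `(A u)_i` through `|A|_{ij}`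
and through `|A|_{iℓ}` gives `-|A|_{ij} x⁻¹ y = |A|_{iℓ}`.
-/

open Matrix

variable {R : Type*} [Ring R]

/-- The submatrix of `A` obtained by deleting row `i` and column `j`,
with rows and columns retaining their original labels. -/
def delSub {I J : Type*} (A : Matrix I J R) (i : I) (j : J) :
    Matrix {p : I // p ≠ i} {q : J // q ≠ j} R :=
  A.submatrix Subtype.val Subtype.val

/-- A (possibly rectangular-typed) matrix is invertible if it has a two-sided inverse. -/
def HasTwoSidedInv {I J : Type*} [Fintype I] [Fintype J] [DecidableEq I] [DecidableEq J]
    (M : Matrix I J R) : Prop :=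
  ∃ B : Matrix J I R, M * B = 1 ∧ B * M = 1

/-- The quasideterminant `|A|_{ij}` is defined iff `A^{ij}` is invertible. -/
def QdetDefined {I J : Type*} [Fintype I] [Fintype J] [DecidableEq I] [DecidableEq J]
    (A : Matrix I J R) (i : I) (j : J) : Prop :=
  HasTwoSidedInv (delSub A i j)

/- The quasideterminant `|A|_{ij} = a_{ij} - r_i^j (A^{ij})⁻¹ c_j^i` (junk value `0`
if `A^{ij}` is not invertible). -/
open Classical in
noncomputable def qdet {I J : Type*} [Fintype I] [Fintype J] [DecidableEq I] [DecidableEq J]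
    (A : Matrix I J R) (i : I) (j : J) : R :=
  if h : QdetDefined A i j then
    A i j - ∑ p : {p : I // p ≠ i}, ∑ q : {q : J // q ≠ j},
      A i q.val * (Exists.choose h) q p * A p.val j
  else 0

/-- A square matrix is generic if all of its square submatrices (including itself)
are invertible. -/
def Generic {n : ℕ} (A : Matrix (Fin n) (Fin n) R) : Prop :=
  ∀ S T : Finset (Fin n), S.card = T.card →
    HasTwoSidedInv (A.submatrix (Subtype.val : {p : Fin n // p ∈ S} → Fin n)
      (Subtype.val : {q : Fin n // q ∈ T} → Fin n))

section Helpers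

variable {S I J : Type*} [Ring S] [Fintype I] [Fintype J] [DecidableEq I] [DecidableEq J]

theorem qdet_mul_of_ker (M : Matrix I J S) (i : I) (j : J) (h : QdetDefined M i j)
    (u : J → S) (hu : ∀ p, p ≠ i → ∑ q, M p q * u q = 0) :
    ∑ q, M i q * u q = qdet M i j * u j := by
  have hB := (Exists.choose_spec h).2
  rw [qdet, dif_pos h]
  set B := Exists.choose h
  -- the rows of `M u = 0` other than `i`, solved for the entries of `u` other than `u j`
  have key : ∀ q : {q : J // q ≠ j}, ∑ p : {p : I // p ≠ i}, B q p * (M p.1 j * u j) = - u q.1 := by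
    intro q
    have e1 : ∀ p : {p : I // p ≠ i},
        M p.1 j * u j = - ∑ q' : {q : J // q ≠ j}, delSub M i j p q' * u q'.1 := by
      intro p
      have := hu p.1 p.2
      rw [Fintype.sum_eq_add_sum_subtype_ne _ j] at this
      exact eq_neg_of_add_eq_zero_left this
    have e2 := congrFun (congrArg (fun N => N *ᵥ (fun q' : {q : J // q ≠ j} => u q'.1)) hB) q
    simp only [← mulVec_mulVec, one_mulVec] at e2
    simp only [e1, mul_neg, Finset.sum_neg_distrib]
    rw [← e2]
    rfl
  rw [Fintype.sum_eq_add_sum_subtype_ne _ j, sub_mul, sub_eq_add_neg, Finset.sum_comm,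
    Finset.sum_mul, ← Finset.sum_neg_distrib]
  congr 1
  refine Finset.sum_congr rfl fun q _ => ?_
  have := key q
  rw [eq_neg_iff_add_eq_zero, add_comm, ← eq_neg_iff_add_eq_zero] at this
  rw [this, mul_neg, Finset.mul_sum, Finset.sum_mul]
  simp only [mul_assoc]

theorem exists_qdet_vector (M : Matrix I J S) (i : I) (j : J) (h : QdetDefined M i j) :
    ∃ v : J → S, v j = 1 ∧ (∀ p, p ≠ i → ∑ q, M p q * v q = 0) ∧
      ∑ q, M i q * v q = qdet M i j := by
  have hB := (Exists.choose_spec h).1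
  set B := Exists.choose h
  let v : J → S := fun q => if hq : q = j then 1 else
    - ∑ p : {p : I // p ≠ i}, B ⟨q, hq⟩ p * M p.1 j
  have hvj : v j = 1 := by simp [v]
  have hv : ∀ q : {q : J // q ≠ j}, v q.1 = - (B *ᵥ fun p => M p.1 j) q := by
    intro q
    simp only [v, dif_neg q.2]
    rfl
  have hker : ∀ p, p ≠ i → ∑ q, M p q * v q = 0 := by
    intro p hp
    have e := congrFun (congrArg (fun N => N *ᵥ (fun p : {p : I // p ≠ i} => M p.1 j)) hB) ⟨p, hp⟩
    simp only [← mulVec_mulVec, one_mulVec] at e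
    rw [Fintype.sum_eq_add_sum_subtype_ne _ j, hvj]
    simp only [hv, mul_neg, mul_one, Finset.sum_neg_distrib]
    exact add_neg_eq_zero.2 e.symm
  exact ⟨v, hvj, hker, by rw [qdet_mul_of_ker M i j h v hker, hvj, mul_one]⟩

/-- `exists_qdet_vector` for the minor `A^{iℓ}`, with the vector extended by zero to column `ℓ`. -/
theorem exists_minor_vector (A : Matrix I J S) (i s : I) (j ℓ : J) (hs : s ≠ i) (hj : j ≠ ℓ)
    (h : QdetDefined (delSub A i ℓ) ⟨s, hs⟩ ⟨j, hj⟩) :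
    ∃ w : J → S, w j = 1 ∧ w ℓ = 0 ∧ (∀ p, p ≠ i → p ≠ s → ∑ q, A p q * w q = 0) ∧
      ∑ q, A s q * w q = qdet (delSub A i ℓ) ⟨s, hs⟩ ⟨j, hj⟩ := by
  obtain ⟨v, hv1, hv2, hv3⟩ := exists_qdet_vector _ _ _ h
  let w : J → S := fun q => if hq : q = ℓ then 0 else v ⟨q, hq⟩
  have hwl : w ℓ = 0 := by simp [w]
  have hw : ∀ q : {q : J // q ≠ ℓ}, w q.1 = v q := fun q => by simp only [w, dif_neg q.2]
  have hsum : ∀ p (hp : p ≠ i), ∑ q, A p q * w q = ∑ q, delSub A i ℓ ⟨p, hp⟩ q * v q := by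
    intro p hp
    rw [Fintype.sum_eq_add_sum_subtype_ne _ ℓ, hwl, mul_zero, zero_add]
    simp only [hw]
    rfl
  refine ⟨w, (hw ⟨j, hj⟩).trans hv1, hwl, fun p hp hps => ?_, (hsum s hs).trans hv3⟩
  rw [hsum p hp]
  exact hv2 _ fun e => hps (congrArg Subtype.val e)

end Helpers

/-- Row homological relation:
`−|A|_{ij} · (|A^{iℓ}|_{sj})⁻¹ = |A|_{iℓ} · (|A^{ij}|_{sℓ})⁻¹`. -/
theorem row_homological_relation {R : Type*} [DivisionRing R] {n : ℕ} (hn : 2 ≤ n)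
    (A : Matrix (Fin n) (Fin n) R) (i s j ℓ : Fin n) (his : i ≠ s) (hjl : j ≠ ℓ)
    (h1 : QdetDefined A i j) (h2 : QdetDefined A i ℓ)
    (h3 : QdetDefined (delSub A i ℓ) ⟨s, his.symm⟩ ⟨j, hjl⟩)
    (h4 : QdetDefined (delSub A i j) ⟨s, his.symm⟩ ⟨ℓ, hjl.symm⟩)
    (h5 : qdet (delSub A i ℓ) ⟨s, his.symm⟩ ⟨j, hjl⟩ ≠ 0)
    (h6 : qdet (delSub A i j) ⟨s, his.symm⟩ ⟨ℓ, hjl.symm⟩ ≠ 0) :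
    -(qdet A i j * (qdet (delSub A i ℓ) ⟨s, his.symm⟩ ⟨j, hjl⟩)⁻¹) =
      qdet A i ℓ * (qdet (delSub A i j) ⟨s, his.symm⟩ ⟨ℓ, hjl.symm⟩)⁻¹ := by
  obtain ⟨w, hwj, hwl, hw0, hws⟩ := exists_minor_vector A i s j ℓ his.symm hjl h3
  obtain ⟨w', hwl', hwj', hw0', hws'⟩ := exists_minor_vector A i s ℓ j his.symm hjl.symm h4
  set x := qdet (delSub A i ℓ) ⟨s, his.symm⟩ ⟨j, hjl⟩
  set y := qdet (delSub A i j) ⟨s, his.symm⟩ ⟨ℓ, hjl.symm⟩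
  have hu : ∀ p, p ≠ i → ∑ q, A p q * (w' q - w q * (x⁻¹ * y)) = 0 := by
    intro p hp
    simp only [mul_sub, Finset.sum_sub_distrib, ← mul_assoc (A p _), ← Finset.sum_mul]
    by_cases hps : p = s
    · rw [hps, hws, hws', mul_inv_cancel_left₀ h5, sub_self]
    · rw [hw0 p hp hps, hw0' p hp hps, zero_mul, sub_self]
  have e := (qdet_mul_of_ker A i j h1 _ hu).symm.trans (qdet_mul_of_ker A i ℓ h2 _ hu)
  simp only [hwj, hwl, hwj', hwl', zero_sub, one_mul, zero_mul, sub_zero, mul_one] at e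
  rw [← e, mul_neg, neg_mul, mul_assoc, mul_assoc, mul_inv_cancel₀ h6, mul_one]
end

section
/- Let R be a division ring, n ≥ 2, and A = (a_{pq}) an n×n matrix over R. Fix row indices i ≠ k and column indices j ≠ t. Assume the submatrices A^{ij} and A^{kj} are invertible (so that |A|_{ij} and |A|_{kj} are defined) and that the quasideterminants |A^{kj}|_{it} and |A^{ij}|_{kt} are defined and invertible in R. Then the column homological relation holds: −(|A^{kj}|_{it})^{−1} · |A|_{ij} = (|A^{ij}|_{kt})^{−1} · |A|_{kj}. -/
/-!
The quasideterminant `|A|_{ij}` has a description free of inverses: there is a column vector `v`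
with `v_j = 1` and `A v = |A|_{ij} e_i`, and conversely every `u` with `(A u)_p = 0` for all
`p ≠ i` satisfies `(A u)_i = |A|_{ij} u_j` (`exists_vec_qdet`, `qdet_mul_of_vec`).

Take `v` with `v_j = 1`, `A v = |A|_{ij} e_i` and `w` with `w_j = 1`, `A w = |A|_{kj} e_k`. The
difference `u = v - w` vanishes at `j`, so it is a vector on the columns other than `j`, and
`A u = |A|_{ij} e_i - |A|_{kj} e_k`. Deleting row `k` gives `|A|_{ij} = |A^{kj}|_{it} u_t`, and
deleting row `i` gives `-|A|_{kj} = |A^{ij}|_{kt} u_t`. Both sides of the relation equal `-u_t`.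
-/

open Matrix

variable {R : Type*} [Ring R]

/-- Existence half of the description of `|A|_{ij}` by vectors: `v_q = -((A^{ij})⁻¹ c_j^i)_q` for
`q ≠ j` and `v_j = 1` give `A v = |A|_{ij} e_i`. -/
theorem exists_vec_qdet {R : Type*} [Ring R] {I J : Type*} [Fintype I] [Fintype J]
    [DecidableEq I] [DecidableEq J] (A : Matrix I J R) (i : I) (j : J) (h : QdetDefined A i j) :
    ∃ v : J → R, v j = 1 ∧ (∀ p, p ≠ i → ∑ q, A p q * v q = 0) ∧
      ∑ q, A i q * v q = qdet A i j := by
  set B := Exists.choose h with hB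
  have hMB : delSub A i j * B = 1 := (Exists.choose_spec h).1
  set x : {q : J // q ≠ j} → R := B *ᵥ (fun p => A p.val j) with hx
  have hv : ∀ p, ∑ q, A p q * (if hq : q = j then 1 else -x ⟨q, hq⟩)
      = A p j - ∑ q : {q : J // q ≠ j}, A p q.val * x q := by
    intro p
    rw [Fintype.sum_eq_add_sum_subtype_ne _ j, sub_eq_add_neg, ← Finset.sum_neg_distrib]
    congr 1
    · simp
    · refine Finset.sum_congr rfl fun q _ => ?_
      simp [q.2]
  refine ⟨fun q => if hq : q = j then 1 else -x ⟨q, hq⟩, by simp, fun p hp => ?_, ?_⟩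
  · rw [hv p, sub_eq_zero]
    have h1 : delSub A i j *ᵥ x = fun p => A p.val j := by
      rw [hx, mulVec_mulVec, hMB, one_mulVec]
    exact (congrFun h1 ⟨p, hp⟩).symm
  · rw [hv i, qdet, dif_pos h, Finset.sum_comm]
    congr 1
    refine Finset.sum_congr rfl fun q _ => ?_
    simp only [hx, mulVec, dotProduct, Finset.mul_sum, mul_assoc]
    rfl

/-- Uniqueness half of the description of `|A|_{ij}` by vectors. -/
theorem qdet_mul_of_vec {R : Type*} [Ring R] {I J : Type*} [Fintype I] [Fintype J]
    [DecidableEq I] [DecidableEq J] (A : Matrix I J R) (i : I) (j : J) (h : QdetDefined A i j)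
    (u : J → R) (hu : ∀ p, p ≠ i → ∑ q, A p q * u q = 0) :
    ∑ q, A i q * u q = qdet A i j * u j := by
  obtain ⟨v, hvj, hv0, hvi⟩ := exists_vec_qdet A i j h
  obtain ⟨B, -, hBM⟩ := h
  -- `u - v u_j` vanishes at `j` and is killed by `A^{ij}`, hence is zero.
  have key : (fun q : {q : J // q ≠ j} => u q.val - v q.val * u j) = 0 := by
    rw [← one_mulVec (fun q : {q : J // q ≠ j} => u q.val - v q.val * u j), ← hBM,
      ← mulVec_mulVec]
    refine (congrArg (B *ᵥ ·) ?_).trans (mulVec_zero B)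
    funext p
    have h0 : ∑ q, A p.val q * (u q - v q * u j) = 0 := by
      simp only [mul_sub, Finset.sum_sub_distrib, ← mul_assoc, ← Finset.sum_mul]
      rw [hu p p.2, hv0 p p.2]; simp
    rw [Fintype.sum_eq_add_sum_subtype_ne _ j, hvj] at h0
    simpa [mulVec, dotProduct, delSub] using h0
  have huv : ∀ q, u q = v q * u j := by
    intro q
    by_cases hq : q = j
    · rw [hq, hvj, one_mul]
    · exact sub_eq_zero.mp (congrFun key ⟨q, hq⟩)
  rw [← hvi, Finset.sum_mul]
  exact Finset.sum_congr rfl fun q _ => by rw [huv q, mul_assoc]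

/-- Column homological relation:
`−(|A^{kj}|_{it})⁻¹ · |A|_{ij} = (|A^{ij}|_{kt})⁻¹ · |A|_{kj}`. -/
theorem column_homological_relation {R : Type*} [DivisionRing R] {n : ℕ} (hn : 2 ≤ n)
    (A : Matrix (Fin n) (Fin n) R) (i k j t : Fin n) (hik : i ≠ k) (hjt : j ≠ t)
    (h1 : QdetDefined A i j) (h2 : QdetDefined A k j)
    (h3 : QdetDefined (delSub A k j) ⟨i, hik⟩ ⟨t, hjt.symm⟩)
    (h4 : QdetDefined (delSub A i j) ⟨k, hik.symm⟩ ⟨t, hjt.symm⟩)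
    (h5 : qdet (delSub A k j) ⟨i, hik⟩ ⟨t, hjt.symm⟩ ≠ 0)
    (h6 : qdet (delSub A i j) ⟨k, hik.symm⟩ ⟨t, hjt.symm⟩ ≠ 0) :
    -((qdet (delSub A k j) ⟨i, hik⟩ ⟨t, hjt.symm⟩)⁻¹ * qdet A i j) =
      (qdet (delSub A i j) ⟨k, hik.symm⟩ ⟨t, hjt.symm⟩)⁻¹ * qdet A k j := by
  obtain ⟨v, hvj, hv0, hvi⟩ := exists_vec_qdet A i j h1
  obtain ⟨w, hwj, hw0, hwk⟩ := exists_vec_qdet A k j h2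
  have hu : ∀ p, ∑ q : {q : Fin n // q ≠ j}, A p q.val * (v q.val - w q.val)
      = ∑ q, A p q * v q - ∑ q, A p q * w q := by
    intro p
    rw [← Finset.sum_sub_distrib, Fintype.sum_eq_add_sum_subtype_ne _ j, hvj, hwj, sub_self,
      zero_add]
    simp only [mul_sub]
  have e1 := qdet_mul_of_vec (delSub A k j) ⟨i, hik⟩ ⟨t, hjt.symm⟩ h3
    (fun q => v q.val - w q.val) (fun p hp => by
      refine (hu p.val).trans ?_
      rw [hv0 _ fun e => hp (Subtype.ext e), hw0 _ p.2, sub_zero])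
  have e2 := qdet_mul_of_vec (delSub A i j) ⟨k, hik.symm⟩ ⟨t, hjt.symm⟩ h4
    (fun q => v q.val - w q.val) (fun p hp => by
      refine (hu p.val).trans ?_
      rw [hv0 _ p.2, hw0 _ fun e => hp (Subtype.ext e), sub_zero])
  replace e1 := (hu i).symm.trans e1
  replace e2 := (hu k).symm.trans e2
  rw [hvi, hw0 i hik, sub_zero] at e1
  rw [hv0 k hik.symm, hwk, zero_sub] at e2
  rw [e1, ← neg_neg (qdet A k j), e2, inv_mul_cancel_left₀ h5, mul_neg,
    inv_mul_cancel_left₀ h6]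
end

section
/- Let R be a division ring and let the n×n matrix A over R have the block form A = [[A₁₁, A₁₂],[A₂₁, A₂₂]], where A₁₁ is a k×k block and A₂₂ is an invertible (n−k)×(n−k) block. Then for all i, j ∈ {1,…,k} such that the quasideterminant |A|_{ij} is defined, the quasideterminant |A₁₁ − A₁₂ A₂₂^{−1} A₂₁|_{ij} is defined and |A|_{ij} = |A₁₁ − A₁₂ A₂₂^{−1} A₂₁|_{ij}. -/
/-!
Deleting row `i` and column `j` from `A` leaves the block matrix `[[B, C], [D, A₂₂]]`, where `B`, `C`,
`D` are `A₁₁`, `A₁₂`, `A₂₁` with row `i` and/or column `j` deleted. Since `A₂₂` is invertible with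
inverse `U`, an inverse `[[X, Y], [Z, W]]` of this block matrix is determined by its corner `X`:
`Y = -X C U`, `Z = -U D X`, `W = U + U D X C U`, and `X` is a two-sided inverse of the Schur complement
`B - C U D` (`schur_inverse`). This Schur complement is exactly `A₁₁ - A₁₂ U A₂₁` with row `i` and column
`j` deleted, so the second quasideterminant is defined. With `[r, s]` and `[c; d]` the remaining parts of
row `i` and column `j`, expanding gives
`r X c + r Y d + s Z c + s W d = s U d + (r - s U D) X (c - C U d)` (`schur_expand`),
which is the equality of the two quasideterminants.
-/

open Matrix

variable {R : Type*} [Ring R]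

/-- The quasideterminant can be computed from any two-sided inverse of `A^{ij}`, not just the chosen
one, because inverses are unique. -/
lemma qdet_eq_of_inv {R : Type*} [Ring R] {I J : Type*} [Fintype I] [Fintype J] [DecidableEq I]
    [DecidableEq J] (A : Matrix I J R) (i : I) (j : J) (N : Matrix {q : J // q ≠ j} {p : I // p ≠ i} R)
    (h₁ : delSub A i j * N = 1) (h₂ : N * delSub A i j = 1) :
    qdet A i j = A i j - ∑ p : {p : I // p ≠ i}, ∑ q : {q : J // q ≠ j},
      A i q.val * N q p * A p.val j := by
  have h : QdetDefined A i j := ⟨N, h₁, h₂⟩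
  have hN : Exists.choose h = N := by
    have h₃ := (Exists.choose_spec h).2
    calc Exists.choose h = Exists.choose h * (delSub A i j * N) := by rw [h₁, Matrix.mul_one]
      _ = N := by rw [← Matrix.mul_assoc, h₃, Matrix.one_mul]
  rw [qdet, dif_pos h, hN]

/-- The indices of `I ⊕ K` other than `inl i` are those of `I` other than `i`, together with `K`. -/
def neInlEquiv {I : Type*} (K : Type*) (i : I) :
    {p : I // p ≠ i} ⊕ K ≃ {p : I ⊕ K // p ≠ Sum.inl i} where
  toFun x := match x with
    | .inl p => ⟨.inl p.1, fun h => p.2 (Sum.inl.inj h)⟩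
    | .inr q => ⟨.inr q, Sum.inr_ne_inl⟩
  invFun x := match x with
    | ⟨.inl p, h⟩ => .inl ⟨p, fun e => h (congrArg Sum.inl e)⟩
    | ⟨.inr q, _⟩ => .inr q
  left_inv x := by rcases x with p | q <;> rfl
  right_inv x := by rcases x with ⟨p | q, h⟩ <;> rfl

section Schur

variable {R : Type*} [Ring R] {P Q K : Type*} [Fintype P] [Fintype Q] [Fintype K]

/-- A two-sided inverse of `[[B, C], [D, E]]`, with `E` invertible, is determined by its upper left
corner, which is a two-sided inverse of the Schur complement. -/
lemma schur_inverse [DecidableEq P] [DecidableEq Q] [DecidableEq K]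
    {B : Matrix P Q R} {C : Matrix P K R} {D : Matrix K Q R} {E U : Matrix K K R}
    (hEU : E * U = 1) (hUE : U * E = 1)
    {X : Matrix Q P R} {Y : Matrix Q K R} {Z : Matrix K P R} {W : Matrix K K R}
    (h₁ : fromBlocks B C D E * fromBlocks X Y Z W = 1)
    (h₂ : fromBlocks X Y Z W * fromBlocks B C D E = 1) :
    (B - C * U * D) * X = 1 ∧ X * (B - C * U * D) = 1 ∧
      Y = -(X * C * U) ∧ Z = -(U * D * X) ∧ W = U + U * D * X * C * U := by
  rw [fromBlocks_multiply, ← fromBlocks_one, fromBlocks_inj] at h₁ h₂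
  obtain ⟨a₁, -, a₃, a₄⟩ := h₁
  obtain ⟨b₁, b₂, -, -⟩ := h₂
  have hZ : Z = -(U * D * X) := by
    calc Z = U * E * Z := by rw [hUE, Matrix.one_mul]
      _ = U * (E * Z) := Matrix.mul_assoc ..
      _ = -(U * D * X) := by
        rw [eq_neg_of_add_eq_zero_right a₃, Matrix.mul_neg, Matrix.mul_assoc]
  have hY : Y = -(X * C * U) := by
    calc Y = Y * (E * U) := by rw [hEU, Matrix.mul_one]
      _ = Y * E * U := (Matrix.mul_assoc ..).symm
      _ = -(X * C * U) := by rw [eq_neg_of_add_eq_zero_right b₂, Matrix.neg_mul]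
  have hW : W = U + U * D * X * C * U := by
    calc W = U * E * W := by rw [hUE, Matrix.one_mul]
      _ = U * (E * W) := Matrix.mul_assoc ..
      _ = U * (1 - D * Y) := by rw [eq_sub_of_add_eq' a₄]
      _ = U + U * D * X * C * U := by
        rw [hY, Matrix.mul_neg, sub_neg_eq_add, Matrix.mul_add, Matrix.mul_one]
        simp only [Matrix.mul_assoc]
  refine ⟨?_, ?_, hY, hZ, hW⟩
  · rw [← a₁, hZ, Matrix.sub_mul, Matrix.mul_neg, sub_eq_add_neg]
    simp only [Matrix.mul_assoc]
  · rw [← b₁, hY, Matrix.mul_sub, Matrix.neg_mul, sub_eq_add_neg]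
    simp only [Matrix.mul_assoc]

lemma schur_expand {C : Matrix P K R} {D : Matrix K Q R} {U : Matrix K K R}
    {X : Matrix Q P R} {Y : Matrix Q K R} {Z : Matrix K P R} {W : Matrix K K R}
    (hY : Y = -(X * C * U)) (hZ : Z = -(U * D * X)) (hW : W = U + U * D * X * C * U)
    (r : Matrix Unit Q R) (s : Matrix Unit K R) (c : Matrix P Unit R) (d : Matrix K Unit R) :
    r * X * c + r * Y * d + (s * Z * c + s * W * d) =
      s * U * d + (r - s * U * D) * X * (c - C * U * d) := by
  subst hY hZ hW
  simp only [Matrix.mul_sub, Matrix.sub_mul, Matrix.mul_add, Matrix.add_mul, Matrix.mul_neg,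
    Matrix.neg_mul, Matrix.mul_assoc]
  abel

end Schur

/-- A row times a matrix times a column, as a double sum in the order used by `qdet`. -/
lemma row_mul_col_apply {R : Type*} [Ring R] {P Q : Type*} [Fintype P] [Fintype Q]
    (r : Matrix Unit Q R) (X : Matrix Q P R) (c : Matrix P Unit R) :
    (r * X * c) () () = ∑ p, ∑ q, r () q * X q p * c p () := by
  simp only [Matrix.mul_apply, Finset.sum_mul]

/-- If `A = [[A₁₁, A₁₂],[A₂₁, A₂₂]]` with `A₂₂` invertible, then for `i, j` in the range
of the block `A₁₁` with `|A|_{ij}` defined, `|A₁₁ − A₁₂ A₂₂⁻¹ A₂₁|_{ij}` is defined and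
`|A|_{ij} = |A₁₁ − A₁₂ A₂₂⁻¹ A₂₁|_{ij}`. -/
theorem qdet_block {R : Type*} [DivisionRing R] {k m : ℕ}
    (A₁₁ : Matrix (Fin k) (Fin k) R) (A₁₂ : Matrix (Fin k) (Fin m) R)
    (A₂₁ : Matrix (Fin m) (Fin k) R) (A₂₂ : Matrix (Fin m) (Fin m) R)
    (hA₂₂ : IsUnit A₂₂) (i j : Fin k)
    (hij : QdetDefined (Matrix.fromBlocks A₁₁ A₁₂ A₂₁ A₂₂) (Sum.inl i) (Sum.inl j)) :
    QdetDefined (A₁₁ - A₁₂ * Ring.inverse A₂₂ * A₂₁) i j ∧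
      qdet (Matrix.fromBlocks A₁₁ A₁₂ A₂₁ A₂₂) (Sum.inl i) (Sum.inl j) =
        qdet (A₁₁ - A₁₂ * Ring.inverse A₂₂ * A₂₁) i j := by
  set U := Ring.inverse A₂₂ with hU
  have hEU : A₂₂ * U = 1 := Ring.mul_inverse_cancel _ hA₂₂
  have hUE : U * A₂₂ = 1 := Ring.inverse_mul_cancel _ hA₂₂
  obtain ⟨N, hN₁, hN₂⟩ := hij
  let e := neInlEquiv (Fin m) i
  let f := neInlEquiv (Fin m) j
  let B := delSub A₁₁ i j
  let C : Matrix {p // p ≠ i} (Fin m) R := A₁₂.submatrix Subtype.val id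
  let D : Matrix (Fin m) {q // q ≠ j} R := A₂₁.submatrix id Subtype.val
  have hM : (delSub (fromBlocks A₁₁ A₁₂ A₂₁ A₂₂) (Sum.inl i) (Sum.inl j)).submatrix e f =
      fromBlocks B C D A₂₂ := by
    ext (p | p) (q | q) <;> rfl
  let N' := N.submatrix f e
  have h₁ : fromBlocks B C D A₂₂ * N' = 1 := by
    rw [← hM, Matrix.submatrix_mul_equiv, hN₁, Matrix.submatrix_one_equiv]
  have h₂ : N' * fromBlocks B C D A₂₂ = 1 := by
    rw [← hM, Matrix.submatrix_mul_equiv, hN₂, Matrix.submatrix_one_equiv]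
  rw [← fromBlocks_toBlocks N'] at h₁ h₂
  obtain ⟨hX₁, hX₂, hY, hZ, hW⟩ := schur_inverse hEU hUE h₁ h₂
  have hS : delSub (A₁₁ - A₁₂ * U * A₂₁) i j = B - C * U * D := by
    ext p q
    simp [delSub, B, C, D, Matrix.mul_apply]
  rw [← hS] at hX₁ hX₂
  refine ⟨⟨_, hX₁, hX₂⟩, ?_⟩
  rw [qdet_eq_of_inv _ _ _ N hN₁ hN₂, qdet_eq_of_inv _ _ _ _ hX₁ hX₂]
  let r : Matrix Unit {q // q ≠ j} R := fun _ q => A₁₁ i q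
  let s : Matrix Unit (Fin m) R := fun _ q => A₁₂ i q
  let c : Matrix {p // p ≠ i} Unit R := fun p _ => A₁₁ p j
  let d : Matrix (Fin m) Unit R := fun p _ => A₂₁ p j
  have key := congrFun (congrFun (schur_expand hY hZ hW r s c d) ()) ()
  simp only [Matrix.add_apply, row_mul_col_apply] at key
  -- Splitting both index sets with `neInlEquiv` yields the four block terms.
  have hL : (∑ p : {p // p ≠ Sum.inl i}, ∑ q : {q // q ≠ Sum.inl j},
      fromBlocks A₁₁ A₁₂ A₂₁ A₂₂ (Sum.inl i) q.val * N q p *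
        fromBlocks A₁₁ A₁₂ A₂₁ A₂₂ p.val (Sum.inl j)) =
      ∑ p, ∑ q, s () q * U q p * d p () +
        ∑ p, ∑ q, (r - s * U * D) () q * N'.toBlocks₁₁ q p * (c - C * U * d) p () := by
    rw [← e.sum_comp]
    simp_rw [← f.sum_comp]
    simp only [Fintype.sum_sum_type, Finset.sum_add_distrib]
    exact key
  have hr : ∀ q, (r - s * U * D) () q = (A₁₁ - A₁₂ * U * A₂₁) i q.val := by
    intro q
    simp only [Matrix.sub_apply, Matrix.mul_apply]
    rfl
  have hc : ∀ p, (c - C * U * d) p () = (A₁₁ - A₁₂ * U * A₂₁) p.val j := by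
    intro p
    simp only [Matrix.sub_apply, Matrix.mul_apply]
    rfl
  have hsd : (A₁₁ - A₁₂ * U * A₂₁) i j =
      A₁₁ i j - ∑ p, ∑ q, s () q * U q p * d p () := by
    rw [← row_mul_col_apply]
    simp only [Matrix.sub_apply, Matrix.mul_apply]
    rfl
  rw [hL, hsd]
  simp only [hr, hc, fromBlocks_apply₁₁]
  abel
end

section
/- (Noncommutative Sylvester identity.) Let R be a division ring and A = (a_{pq}) an n×n matrix over R. Suppose the leading k×k submatrix A₀ = (a_{pq})_{p,q=1,…,k} is invertible. For p, q ∈ {k+1,…,n}, let b_{pq} be the quasideterminant at the bottom-right entry of the (k+1)×(k+1) matrix obtained by bordering A₀ with the entries a_{1q},…,a_{kq} as last column and a_{p1},…,a_{pk} as last row, with a_{pq} in the corner, and let B = (b_{pq})_{p,q=k+1,…,n}. Then for all i, j ∈ {k+1,…,n} such that both quasideterminants are defined, |A|_{ij} = |B|_{ij}. -/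
/-!
The quasideterminant `|A|_{ij}` (when defined) is the number `x` for which the system
`A u = x e_i` has a solution with `u_j = 1`: such a `u` exists (`exists_vec_of_qdetDefined`) and
any such `u` computes the quasideterminant (`qdet_eq_of_vec`).

Let `W` solve `A₀ W = A₀₁`, where `A₀₁` is the block of `A` to the right of `A₀`. Applying the
characterization to the bordered matrices gives `b_{pq} = a_{pq} - ∑_s a_{ps} W_{sq}`, so `B` is
the Schur complement of `A₀` (`bordered_qdet`). If `B v = x e_i` with `v_j = 1`, then the vector
`u` with lower part `v` and upper part `-W v` satisfies `A u = x e_i` and `u_j = 1`, so both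
quasideterminants equal `x`.
-/

open Matrix

variable {R : Type*} [Ring R]

/-- Any `u` with `u j = 1` that is annihilated by all rows of `A` other than `i` computes
the quasideterminant: the remaining coordinates of `u` must be `-(A^{ij})⁻¹ c_j^i`. -/
theorem qdet_eq_of_vec {I J : Type*} [Fintype I] [Fintype J] [DecidableEq I] [DecidableEq J]
    (A : Matrix I J R) (i : I) (j : J) (h : QdetDefined A i j) (u : J → R) (hj : u j = 1)
    (hu : ∀ p, p ≠ i → ∑ q, A p q * u q = 0) :
    qdet A i j = ∑ q, A i q * u q := by
  have hq : qdet A i j = A i j - ∑ p : {p : I // p ≠ i}, ∑ q : {q : J // q ≠ j},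
      A i q.val * (Exists.choose h) q p * A p.val j := by
    unfold qdet
    rw [dif_pos h]
  obtain ⟨-, hC⟩ := Exists.choose_spec h
  rw [hq]
  generalize Exists.choose h = C at hC
  have h1 : (delSub A i j) *ᵥ (fun q => u q.val) = fun p => -A p.val j := by
    funext p
    have := hu p.val p.2
    rw [Fintype.sum_eq_add_sum_subtype_ne _ j, hj, mul_one] at this
    exact eq_neg_of_add_eq_zero_right this
  have h2 : (fun q : {q : J // q ≠ j} => u q.val) = C *ᵥ (fun p => -A p.val j) := by
    rw [← h1, Matrix.mulVec_mulVec, hC, Matrix.one_mulVec]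
  rw [Fintype.sum_eq_add_sum_subtype_ne _ j, hj, mul_one, sub_eq_add_neg, Finset.sum_comm,
    ← Finset.sum_neg_distrib]
  congr 1
  refine Finset.sum_congr rfl fun q _ => ?_
  rw [show u q.val = _ from congrFun h2 q]
  simp [Matrix.mulVec, dotProduct, Finset.mul_sum, mul_assoc]

theorem exists_vec_of_qdetDefined {I J : Type*} [Fintype I] [Fintype J] [DecidableEq I]
    [DecidableEq J] (A : Matrix I J R) (i : I) (j : J) (h : QdetDefined A i j) :
    ∃ u : J → R, u j = 1 ∧ ∀ p, p ≠ i → ∑ q, A p q * u q = 0 := by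
  obtain ⟨C, hC, -⟩ := h
  refine ⟨fun q => if hq : q = j then 1 else (C *ᵥ (fun p => -A p.val j)) ⟨q, hq⟩, by simp, ?_⟩
  intro p hp
  rw [Fintype.sum_eq_add_sum_subtype_ne _ j]
  have h1 : (delSub A i j) *ᵥ (C *ᵥ (fun p => -A p.val j)) = fun p => -A p.val j := by
    rw [Matrix.mulVec_mulVec, hC, Matrix.one_mulVec]
  have h2 : ∑ q : {q : J // q ≠ j}, A p q.val * (C *ᵥ (fun p => -A p.val j)) q = -A p j :=
    congrFun h1 ⟨p, hp⟩
  have h3 : ∀ q : {q : J // q ≠ j}, q.val ≠ j := fun q => q.2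
  simp only [dif_pos, mul_one, dif_neg (h3 _), Subtype.coe_eta, h2, add_neg_cancel]

/-- Deleting the added index from the index set of a bordered matrix leaves the index set
of `A₀`. -/
def borderEquiv {n k : ℕ} (p : Fin n) (hp : k ≤ (p : ℕ)) :
    {r : {r : Fin n // (r : ℕ) < k ∨ r = p} // r ≠ ⟨p, Or.inr rfl⟩} ≃
      {r : Fin n // (r : ℕ) < k} where
  toFun r := ⟨r.1.1, r.1.2.resolve_right fun h => r.2 (Subtype.ext h)⟩
  invFun r := ⟨⟨r.1, Or.inl r.2⟩, fun h => by
    have h1 : r.1 = p := congrArg Subtype.val h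
    have h2 := r.2
    rw [h1] at h2
    omega⟩
  left_inv _ := rfl
  right_inv _ := rfl

/-- If `W` solves `A₀ W = a_{·q}`, the bordered quasideterminant is the Schur complement
entry `a_{pq} - a_{p·} W`. -/
theorem bordered_qdet {n k : ℕ} (A : Matrix (Fin n) (Fin n) R)
    (hA₀ : HasTwoSidedInv (A.submatrix
      (Subtype.val : {p : Fin n // (p : ℕ) < k} → Fin n)
      (Subtype.val : {q : Fin n // (q : ℕ) < k} → Fin n)))
    (p q : Fin n) (hp : k ≤ (p : ℕ)) (hq : k ≤ (q : ℕ))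
    (W : {s : Fin n // (s : ℕ) < k} → R)
    (hW : ∀ t : Fin n, (t : ℕ) < k → ∑ s : {s : Fin n // (s : ℕ) < k}, A t s.val * W s = A t q) :
    qdet (A.submatrix
        (Subtype.val : {r : Fin n // (r : ℕ) < k ∨ r = p} → Fin n)
        (Subtype.val : {s : Fin n // (s : ℕ) < k ∨ s = q} → Fin n))
        ⟨p, Or.inr rfl⟩ ⟨q, Or.inr rfl⟩ =
      A p q - ∑ s : {s : Fin n // (s : ℕ) < k}, A p s.val * W s := by
  have hdef : QdetDefined (A.submatrix
        (Subtype.val : {r : Fin n // (r : ℕ) < k ∨ r = p} → Fin n)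
        (Subtype.val : {s : Fin n // (s : ℕ) < k ∨ s = q} → Fin n))
        ⟨p, Or.inr rfl⟩ ⟨q, Or.inr rfl⟩ := by
    obtain ⟨C, h1, h2⟩ := hA₀
    have key : delSub (A.submatrix
        (Subtype.val : {r : Fin n // (r : ℕ) < k ∨ r = p} → Fin n)
        (Subtype.val : {s : Fin n // (s : ℕ) < k ∨ s = q} → Fin n))
        ⟨p, Or.inr rfl⟩ ⟨q, Or.inr rfl⟩ =
        (A.submatrix
          (Subtype.val : {p : Fin n // (p : ℕ) < k} → Fin n)
          (Subtype.val : {q : Fin n // (q : ℕ) < k} → Fin n)).submatrix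
          (borderEquiv p hp) (borderEquiv q hq) := rfl
    refine ⟨C.submatrix (borderEquiv q hq) (borderEquiv p hp), ?_, ?_⟩
    · rw [key, Matrix.submatrix_mul_equiv, h1, Matrix.submatrix_one_equiv]
    · rw [key, Matrix.submatrix_mul_equiv, h2, Matrix.submatrix_one_equiv]
  -- The solution vector is `1` at `q` and `-W` on the first `k` coordinates.
  have hsum : ∀ t : Fin n, ∑ s : {s : Fin n // (s : ℕ) < k ∨ s = q},
      A t s.val * (if h : (s.val : ℕ) < k then -W ⟨s.val, h⟩ else 1) =
      A t q - ∑ s : {s : Fin n // (s : ℕ) < k}, A t s.val * W s := by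
    intro t
    rw [Fintype.sum_eq_add_sum_subtype_ne _ ⟨q, Or.inr rfl⟩, dif_neg (not_lt.2 hq), mul_one,
      ← (borderEquiv q hq).symm.sum_comp, sub_eq_add_neg, ← Finset.sum_neg_distrib]
    congr 1
    refine Finset.sum_congr rfl fun s _ => ?_
    have hs : ((((borderEquiv q hq).symm s).val.val : Fin n) : ℕ) < k := s.2
    rw [dif_pos hs, mul_neg]
    rfl
  rw [qdet_eq_of_vec _ _ _ hdef
    (fun s => if h : (s.val : ℕ) < k then -W ⟨s.val, h⟩ else 1) (dif_neg (not_lt.2 hq))]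
  · exact hsum p
  · rintro ⟨t, ht⟩ htp
    have htk : (t : ℕ) < k := ht.resolve_right fun h => htp (Subtype.ext h)
    exact (hsum t).trans (by rw [hW t htk, sub_self])

/-- Noncommutative Sylvester identity: if the leading `k×k` submatrix `A₀` of `A` is
invertible, `b_{pq}` is the quasideterminant at the bottom-right corner of `A₀` bordered by
row `p` and column `q`, and `B = (b_{pq})_{p,q > k}`, then `|A|_{ij} = |B|_{ij}` whenever
both sides are defined. -/
theorem sylvester_identity {R : Type*} [DivisionRing R] {n : ℕ} (k : ℕ)
    (A : Matrix (Fin n) (Fin n) R)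
    (hA₀ : HasTwoSidedInv (A.submatrix
      (Subtype.val : {p : Fin n // (p : ℕ) < k} → Fin n)
      (Subtype.val : {q : Fin n // (q : ℕ) < k} → Fin n)))
    (B : Matrix {p : Fin n // k ≤ (p : ℕ)} {q : Fin n // k ≤ (q : ℕ)} R)
    (hB : ∀ (p : {p : Fin n // k ≤ (p : ℕ)}) (q : {q : Fin n // k ≤ (q : ℕ)}),
      B p q = qdet (A.submatrix
        (Subtype.val : {r : Fin n // (r : ℕ) < k ∨ r = p.val} → Fin n)
        (Subtype.val : {s : Fin n // (s : ℕ) < k ∨ s = q.val} → Fin n))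
        ⟨p.val, Or.inr rfl⟩ ⟨q.val, Or.inr rfl⟩)
    (i j : Fin n) (hi : k ≤ (i : ℕ)) (hj : k ≤ (j : ℕ))
    (hdA : QdetDefined A i j) (hdB : QdetDefined B ⟨i, hi⟩ ⟨j, hj⟩) :
    qdet A i j = qdet B ⟨i, hi⟩ ⟨j, hj⟩ := by
  obtain ⟨C, hC, -⟩ := id hA₀
  -- `W = A₀⁻¹ A₀₁`
  obtain ⟨W, hW⟩ : ∃ W : {s : Fin n // (s : ℕ) < k} → {q : Fin n // k ≤ (q : ℕ)} → R,
      ∀ (q : {q : Fin n // k ≤ (q : ℕ)}) (t : Fin n), (t : ℕ) < k →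
        ∑ s : {s : Fin n // (s : ℕ) < k}, A t s.val * W s q = A t q.val := by
    refine ⟨fun s q => (C *ᵥ fun t => A t.val q.val) s, fun q t ht => ?_⟩
    have h1 : A.submatrix (Subtype.val : {p : Fin n // (p : ℕ) < k} → Fin n)
        (Subtype.val : {q : Fin n // (q : ℕ) < k} → Fin n) *ᵥ
        (C *ᵥ fun t => A t.val q.val) = fun t => A t.val q.val := by
      rw [Matrix.mulVec_mulVec, hC, Matrix.one_mulVec]
    exact congrFun h1 ⟨t, ht⟩
  have hB' : ∀ p q, B p q = A p.val q.val -
      ∑ s : {s : Fin n // (s : ℕ) < k}, A p.val s.val * W s q := fun p q =>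
    (hB p q).trans (bordered_qdet A hA₀ p.val q.val p.2 q.2 (fun s => W s q) (hW q))
  obtain ⟨v, hv1, hv⟩ := exists_vec_of_qdetDefined B ⟨i, hi⟩ ⟨j, hj⟩ hdB
  let u : Fin n → R := fun s => if h : (s : ℕ) < k then
    -∑ q, W ⟨s, h⟩ q * v q else v ⟨s, not_lt.1 h⟩
  have hsum : ∀ t : Fin n, ∑ s, A t s * u s = ∑ q : {q : Fin n // k ≤ (q : ℕ)},
      (A t q.val - ∑ s : {s : Fin n // (s : ℕ) < k}, A t s.val * W s q) * v q := by
    intro t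
    rw [← Fintype.sum_subtype_add_sum_subtype (fun s : Fin n => (s : ℕ) < k)]
    have e1 : ∑ s : {s : Fin n // (s : ℕ) < k}, A t s.val * u s.val =
        -∑ q : {q : Fin n // k ≤ (q : ℕ)},
          (∑ s : {s : Fin n // (s : ℕ) < k}, A t s.val * W s q) * v q := by
      simp only [Finset.sum_mul]
      rw [Finset.sum_comm, ← Finset.sum_neg_distrib]
      refine Finset.sum_congr rfl fun s _ => ?_
      rw [show u s.val = _ from dif_pos s.2, mul_neg, Finset.mul_sum]
      simp only [mul_assoc, Subtype.coe_eta]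
    have e2 : ∑ s : {s : Fin n // ¬ (s : ℕ) < k}, A t s.val * u s.val =
        ∑ q : {q : Fin n // k ≤ (q : ℕ)}, A t q.val * v q := by
      refine Fintype.sum_equiv (Equiv.subtypeEquivRight fun s => not_lt) _ _ fun s => ?_
      rw [show u s.val = _ from dif_neg s.2]
      rfl
    rw [e1, e2, neg_add_eq_sub, ← Finset.sum_sub_distrib]
    simp only [sub_mul]
  rw [qdet_eq_of_vec B _ _ hdB v hv1 hv, qdet_eq_of_vec A i j hdA u]
  · rw [hsum i]
    exact Finset.sum_congr rfl fun q _ => by rw [hB']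
  · exact (dif_neg (not_lt.2 hj)).trans hv1
  · intro p hp
    rw [hsum p]
    by_cases hpk : (p : ℕ) < k
    · exact Finset.sum_eq_zero fun q _ => by rw [hW q p hpk, sub_self, zero_mul]
    · rw [← hv ⟨p, not_lt.1 hpk⟩ fun h => hp (congrArg Subtype.val h)]
      exact Finset.sum_congr rfl fun q _ => by rw [hB']
end

section
/- Let R be a division ring, n ≥ 2, and A = (a_{pq}) an n×n matrix over R. Fix indices i, j and assume the submatrix A^{ij} is invertible and that for all p ≠ i and q ≠ j the quasideterminants |A^{ij}|_{pq} are defined and invertible in R. Then |A|_{ij} = a_{ij} − Σ_{p≠i, q≠j} a_{iq} (|A^{ij}|_{pq})^{−1} a_{pj}, where the sum is over all p ∈ {1,…,n}∖{i} and q ∈ {1,…,n}∖{j}. -/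
/-!
The proof rests on the identity `(M⁻¹)_{qp} = (|M|_{pq})⁻¹`, which is `qdet_mul_inv_entry` below.
Column `p` of `M * M⁻¹ = 1`, restricted to the rows `r ≠ p`, is a linear system for the entries
`(M⁻¹)_{kp}` with `k ≠ q` whose matrix is the invertible `M^{pq}`; solving it and substituting into
row `p` gives `|M|_{pq} (M⁻¹)_{qp} = 1`. Applied to `M = A^{ij}`, this turns the definition of
`|A|_{ij}` into the claimed expansion.
-/

open Matrix

variable {R : Type*} [Ring R]

/-- If `B` is a right inverse of `M` and `|M|_{pq}` is defined, then `|M|_{pq} B_{qp} = 1`. -/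
theorem qdet_mul_inv_entry {S I J : Type*} [Ring S] [Fintype I] [Fintype J]
    [DecidableEq I] [DecidableEq J] (M : Matrix I J S) (B : Matrix J I S) (hB : M * B = 1)
    (p : I) (q : J) (h : QdetDefined M p q) : qdet M p q * B q p = 1 := by
  have hrow : ∀ r, M r q * B q p + ∑ k : {k : J // k ≠ q}, M r k.val * B k.val p
      = (1 : Matrix I I S) r p := by
    intro r
    rw [← hB, Matrix.mul_apply,
      Fintype.sum_eq_add_sum_subtype_ne (fun k => M r k * B k p) q]
  rw [qdet, dif_pos h]
  obtain ⟨-, hC⟩ := h.choose_spec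
  set C := h.choose
  -- The system given by the rows `r ≠ p`, solved with the inverse `C` of `M^{pq}`.
  have hsolve : ∀ k : {k : J // k ≠ q},
      B k.val p = -∑ r : {r : I // r ≠ p}, C k r * (M r.val q * B q p) := by
    have hvec : (delSub M p q) *ᵥ (fun k => B k.val p)
        = fun r : {r : I // r ≠ p} => -(M r.val q * B q p) := by
      funext r
      have hr := hrow r.val
      rw [Matrix.one_apply_ne r.property] at hr
      exact eq_neg_of_add_eq_zero_right hr
    intro k
    have hk := congrFun (congrArg (fun v => C *ᵥ v) hvec) k
    simp only [Matrix.mulVec_mulVec, hC, Matrix.one_mulVec] at hk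
    rw [hk]
    simp [Matrix.mulVec, dotProduct]
  have hp := hrow p
  rw [Matrix.one_apply_eq] at hp
  rw [← hp, sub_mul, sub_eq_add_neg, Finset.sum_comm, Finset.sum_mul, ← Finset.sum_neg_distrib]
  congr 1
  refine Finset.sum_congr rfl fun k _ => ?_
  rw [hsolve k, mul_neg, Finset.sum_mul, Finset.mul_sum]
  simp only [mul_assoc]

/-- `|A|_{ij} = a_{ij} − Σ_{p≠i, q≠j} a_{iq} (|A^{ij}|_{pq})⁻¹ a_{pj}`, provided all the
quasideterminants `|A^{ij}|_{pq}` are defined and invertible. -/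
theorem qdet_expansion {R : Type*} [DivisionRing R] {n : ℕ} (hn : 2 ≤ n)
    (A : Matrix (Fin n) (Fin n) R) (i j : Fin n)
    (hd : QdetDefined A i j)
    (hpq : ∀ (p : {p : Fin n // p ≠ i}) (q : {q : Fin n // q ≠ j}),
      QdetDefined (delSub A i j) p q ∧ qdet (delSub A i j) p q ≠ 0) :
    qdet A i j = A i j - ∑ p : {p : Fin n // p ≠ i}, ∑ q : {q : Fin n // q ≠ j},
      A i q.val * (qdet (delSub A i j) p q)⁻¹ * A p.val j := by
  rw [qdet, dif_pos hd]
  congr 1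
  refine Finset.sum_congr rfl fun p _ => Finset.sum_congr rfl fun q _ => ?_
  rw [eq_inv_of_mul_eq_one_right
    (qdet_mul_inv_entry (delSub A i j) _ hd.choose_spec.1 p q (hpq p q).1)]
end

section
/- Let R be a division ring and A a generic n×n matrix over R. Suppose A admits a Gauss decomposition A = U D L, where U is upper triangular with all diagonal entries 1, L is lower triangular with all diagonal entries 1, and D is diagonal with diagonal entries y₁, …, y_n (from top to bottom). Then for each k = 1, …, n, y_k = |A^{1…k−1, 1…k−1}|_{kk}, the (k,k)-quasideterminant of the submatrix of A on rows and columns k, …, n; consequently y₁ y₂ ⋯ y_n = Δ(A), i.e., the Dieudonné predeterminant δετ(A) equals the predeterminant Δ(A). -/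
/-!
Fix `k` and restrict to the indices `> k`, writing `U'`, `D'`, `L'`, `A'` for the restricted
matrices, `u` for row `k` of `U` and `l` for column `k` of `L`, both restricted to these indices.
Since `U` is upper and `L` lower triangular with unit diagonals, comparing entries in `A = U D L`
gives

* `A' = U' D' L'`,
* row `k` of `A` to the right of the diagonal is `u D' L'`,
* column `k` of `A` below the diagonal is `U' D' l`,
* `A k k = y k + u D' l`.

If `B` is the inverse of `A'`, then `D' L' B` is a right inverse of `U'`. Matrices over a division
ring are Dedekind-finite, so it is also a left inverse, and the correction term of the
quasideterminant is `u (D' L' B) U' D' l = u D' l`. Hence the quasideterminant is `y k`.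
-/

open Matrix

variable {R : Type*} [Ring R]

/-- `y_k(A) = |A^{1…k−1,1…k−1}|_{kk}`, the `(k,k)`-quasideterminant of the submatrix of `A`
on rows and columns `k, …, n`. -/
noncomputable def ykQdet {R : Type*} [Ring R] {n : ℕ} (A : Matrix (Fin n) (Fin n) R)
    (k : Fin n) : R :=
  qdet (A.submatrix (Subtype.val : {p : Fin n // k ≤ p} → Fin n)
    (Subtype.val : {q : Fin n // k ≤ q} → Fin n)) ⟨k, le_refl k⟩ ⟨k, le_refl k⟩

/-- The predeterminant `Δ(A) = |A|₁₁ |A^{11}|₂₂ ⋯ a_{nn}`. -/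
noncomputable def Delta {R : Type*} [Ring R] {n : ℕ} (A : Matrix (Fin n) (Fin n) R) : R :=
  ((List.finRange n).map (ykQdet A)).prod

/-- The indices strictly larger than `k`, in the form in which they label the rows of the matrix
inverted in `ykQdet A k`. -/
abbrev TailIdx {n : ℕ} (k : Fin n) : Type :=
  {p : {p : Fin n // k ≤ p} // p ≠ ⟨k, le_refl k⟩}

theorem TailIdx.lt {n : ℕ} {k : Fin n} (s : TailIdx k) : k < s.1.1 :=
  lt_of_le_of_ne s.1.2 fun h => s.2 (Subtype.ext h.symm)

/-- The indices in `TailIdx k` are the elements of the finset `Ioi k`. -/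
def tailEquiv {n : ℕ} (k : Fin n) : TailIdx k ≃ {p : Fin n // p ∈ Finset.Ioi k} where
  toFun s := ⟨s.1.1, Finset.mem_Ioi.2 s.lt⟩
  invFun p := ⟨⟨p.1, (Finset.mem_Ioi.1 p.2).le⟩,
    fun h => (Finset.mem_Ioi.1 p.2).ne' (congrArg Subtype.val h)⟩
  left_inv _ := rfl
  right_inv _ := rfl

theorem sum_eq_add_sum_tail {M : Type*} [AddCommMonoid M] {n : ℕ} (k : Fin n) (f : Fin n → M)
    (hf : ∀ m, m < k → f m = 0) : ∑ m, f m = f k + ∑ s : TailIdx k, f s.1.1 := by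
  have h1 : ∑ s : TailIdx k, f s.1.1 = ∑ m ∈ Finset.Ioi k, f m := by
    rw [← Finset.sum_coe_sort (Finset.Ioi k) f]
    exact Fintype.sum_equiv (tailEquiv k) _ _ fun _ => rfl
  rw [h1, ← Finset.sum_insert (by simp)]
  refine (Finset.sum_subset (Finset.subset_univ _) fun m _ hm => hf m ?_).symm
  simp only [Finset.mem_insert, Finset.mem_Ioi, not_or, not_lt] at hm
  exact lt_of_le_of_ne hm.2 hm.1

theorem qdetDefined_of_generic {R : Type*} [Ring R] {n : ℕ} {A : Matrix (Fin n) (Fin n) R}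
    (hA : Generic A) (k : Fin n) :
    QdetDefined (A.submatrix (Subtype.val : {p : Fin n // k ≤ p} → Fin n)
      (Subtype.val : {q : Fin n // k ≤ q} → Fin n)) ⟨k, le_refl k⟩ ⟨k, le_refl k⟩ := by
  obtain ⟨B, h1, h2⟩ := hA (Finset.Ioi k) (Finset.Ioi k) rfl
  have e1 := congrArg (fun M => M.submatrix (tailEquiv k) (tailEquiv k)) h1
  have e2 := congrArg (fun M => M.submatrix (tailEquiv k) (tailEquiv k)) h2
  simp only [submatrix_one_equiv] at e1 e2
  rw [← submatrix_mul_equiv _ _ _ (tailEquiv k) _] at e1 e2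
  exact ⟨B.submatrix (tailEquiv k) (tailEquiv k), e1, e2⟩

/-- The correction term of the quasideterminant: if `U' D' L'` has right inverse `B`, then `U'` is
invertible with inverse `D' L' B`, so `B` cancels against the outer factors. -/
theorem row_mul_inv_mul_col {R : Type*} [DivisionRing R] {S : Type*} [Fintype S] [DecidableEq S]
    {U' D' L' B : Matrix S S R} (hB : U' * D' * L' * B = 1)
    (u : Matrix Unit S R) (l : Matrix S Unit R) :
    (u * D' * L') * B * (U' * D' * l) = u * D' * l := by
  have h : U' * (D' * L' * B) = 1 := by simpa only [Matrix.mul_assoc] using hB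
  have h' : D' * L' * B * U' = 1 := mul_eq_one_comm.1 h
  calc (u * D' * L') * B * (U' * D' * l) = u * (D' * L' * B * U') * (D' * l) := by
        simp only [Matrix.mul_assoc]
    _ = u * D' * l := by rw [h', Matrix.mul_one, Matrix.mul_assoc]

theorem diag_eq_ykQdet {R : Type*} [DivisionRing R] {n : ℕ}
    {A : Matrix (Fin n) (Fin n) R} (hA : Generic A)
    {U L : Matrix (Fin n) (Fin n) R} {y : Fin n → R}
    (hU : ∀ i j : Fin n, j < i → U i j = 0) (hUdiag : ∀ i : Fin n, U i i = 1)
    (hL : ∀ i j : Fin n, i < j → L i j = 0) (hLdiag : ∀ i : Fin n, L i i = 1)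
    (hA' : A = U * Matrix.diagonal y * L) (k : Fin n) : y k = ykQdet A k := by
  have hdef := qdetDefined_of_generic hA k
  -- Triangularity of `U` alone removes the summands with index below `k`.
  have hsum : ∀ i j : Fin n, k ≤ i →
      A i j = U i k * y k * L k j + ∑ s : TailIdx k, U i s.1.1 * y s.1.1 * L s.1.1 j := by
    intro i j hi
    rw [hA', Matrix.mul_apply]
    simp only [mul_diagonal]
    exact sum_eq_add_sum_tail k (fun m => U i m * y m * L m j) fun m hm => by
      simp [hU i m (hm.trans_le hi)]
  let e : TailIdx k → Fin n := fun s => s.1.1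
  let U' : Matrix (TailIdx k) (TailIdx k) R := U.submatrix e e
  let D' : Matrix (TailIdx k) (TailIdx k) R := Matrix.diagonal fun s => y (e s)
  let L' : Matrix (TailIdx k) (TailIdx k) R := L.submatrix e e
  let u : Matrix Unit (TailIdx k) R := Matrix.of fun _ s => U k (e s)
  let l : Matrix (TailIdx k) Unit R := Matrix.of fun s _ => L (e s) k
  have hmat : A.submatrix e e = U' * D' * L' := by
    ext s t
    simp only [submatrix_apply, Matrix.mul_apply (M := U' * D'), U', D', L', mul_diagonal]
    rw [hsum _ _ s.1.2, hU _ _ s.lt]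
    simp [e]
  have hrow : (Matrix.of fun _ s => A k (e s) : Matrix Unit (TailIdx k) R) = u * D' * L' := by
    ext _ t
    simp only [of_apply, Matrix.mul_apply (M := u * D'), u, D', L', mul_diagonal, submatrix_apply]
    rw [hsum _ _ le_rfl, hL _ _ t.lt]
    simp [e]
  have hcol : (Matrix.of fun s _ => A (e s) k : Matrix (TailIdx k) Unit R) = U' * D' * l := by
    ext s _
    simp only [of_apply, Matrix.mul_apply (M := U' * D'), U', D', l, mul_diagonal, submatrix_apply]
    rw [hsum _ _ s.1.2, hU _ _ s.lt]
    simp [e]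
  have hdiag : A k k = y k + (u * D' * l) () () := by
    simp only [of_apply, Matrix.mul_apply (M := u * D'), u, D', l, mul_diagonal]
    rw [hsum _ _ le_rfl, hUdiag, hLdiag]
    simp [e]
  have hB : U' * D' * L' * hdef.choose = 1 := by
    rw [← hmat]
    exact hdef.choose_spec.1
  have hterm := congrFun (congrFun (row_mul_inv_mul_col hB u l) ()) ()
  rw [← hrow, ← hcol] at hterm
  rw [ykQdet, qdet, dif_pos hdef]
  simp only [submatrix_apply]
  rw [hdiag, ← hterm, Matrix.mul_apply]
  simp only [Matrix.mul_apply, of_apply, Finset.sum_mul, e]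
  rw [add_sub_cancel_right]

/-- If a generic matrix `A` has a Gauss decomposition `A = U D L` (with `U` unipotent upper
triangular, `L` unipotent lower triangular, `D = diag(y₁,…,y_n)`), then each
`y_k = |A^{1…k−1,1…k−1}|_{kk}` and `y₁ ⋯ y_n = Δ(A)`, i.e. the Dieudonné predeterminant
`δετ(A)` equals `Δ(A)`. -/
theorem gauss_decomposition_diag_eq_qdet {R : Type*} [DivisionRing R] {n : ℕ}
    (A : Matrix (Fin n) (Fin n) R) (hA : Generic A)
    (U L : Matrix (Fin n) (Fin n) R) (y : Fin n → R)
    (hU : ∀ i j : Fin n, j < i → U i j = 0) (hUdiag : ∀ i : Fin n, U i i = 1)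
    (hL : ∀ i j : Fin n, i < j → L i j = 0) (hLdiag : ∀ i : Fin n, L i i = 1)
    (hA' : A = U * Matrix.diagonal y * L) :
    (∀ k : Fin n, y k = ykQdet A k) ∧ ((List.finRange n).map y).prod = Delta A := by
  have h : ∀ k, y k = ykQdet A k := diag_eq_ykQdet hA hU hUdiag hL hLdiag hA'
  exact ⟨h, by rw [Delta, ← funext h]⟩
end

section
/- Let A be any n×n matrix over the quaternions ℍ. Then the Study determinant S(A) = det θ_n(A) satisfies S(A) = M(A A*), where M denotes the Moore determinant and A* is the Hermitian conjugate of A; in particular det θ_n(A) is real. -/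
/-!
The theorem rests on the identity `S(H) = M(H)²` for positive semidefinite `H`, applied to
`H = A A*`.

Let `H` be Hermitian, and let `M(S)` be the Moore determinant of the principal submatrix of `H` on
the index set `S` (`mooreOn`). The last factor of each Moore product is the cycle through the
smallest index. Removing the points of this cycle one at a time expresses `M(S)` as a signed sum
over closed self-avoiding paths at the smallest index, weighted by the Moore determinants of the
complements (`mooreOn_eq_openMoore`, `openMoore_eq`, `openMoore_eq_pathSum`). Reversal of paths
shows that `M(S)` is real, and the cyclic invariance of the real part shows that the same expansion
holds at every vertex (`real_and_expand`). It follows that a determinant with a repeated row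
vanishes (`pathSum_eq_zero`), so there is an adjugate column `u`, supported on `S ∪ {c}`, with
`H u = M(S ∪ {c}) e_c` on these rows (`sum_mul_adjCol`).

If `H` is positive definite, pairing `u` with `H u` gives `M(S) M(S ∪ {c}) > 0`, hence `M > 0`
(`mooreOn_pos`), and multiplicativity of the Study determinant gives `S(H) = M(H)²` by induction on
the index set (`studyDet_principal`). Letting `t → 0⁺` in `A A* + t` yields `M(A A*) ≥ 0` and
`M(A A*)² = S(A A*) = |S(A)|²` (`mul_conjTranspose_limit`). Finally `S(A) ≥ 0` by Gaussian
elimination, a vanishing pivot being perturbed (`studyDet_nonneg`), and square roots can be taken.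
-/

open Matrix
open scoped Quaternion

/-- The embedding `θ : ℍ → M(2,ℂ)`, `θ(α + jβ) = [[α, −β̄],[β, ᾱ]]`, where
`h = α + jβ` with `α = re h + (imI h)·i` and `β = imJ h − (imK h)·i`. -/
noncomputable def thetaQ (h : ℍ[ℝ]) : Matrix (Fin 2) (Fin 2) ℂ :=
  let α : ℂ := (h.re : ℂ) + (h.imI : ℂ) * Complex.I
  let β : ℂ := (h.imJ : ℂ) - (h.imK : ℂ) * Complex.I
  !![α, -(starRingEnd ℂ) β; β, (starRingEnd ℂ) α]

/-- `θ_n : M(n,ℍ) → M(2n,ℂ)`: the `2n×2n` complex matrix with `2×2` blocks `θ(a_{ij})`. -/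
noncomputable def thetaN {n : ℕ} (A : Matrix (Fin n) (Fin n) ℍ[ℝ]) :
    Matrix (Fin n × Fin 2) (Fin n × Fin 2) ℂ :=
  fun p q => thetaQ (A p.1 q.1) p.2 q.2

/-- The Study determinant `S(A) = det θ_n(A)`. -/
noncomputable def studyDet {n : ℕ} (A : Matrix (Fin n) (Fin n) ℍ[ℝ]) : ℂ :=
  (thetaN A).det

/-- The Moore determinant `M(A) = Σ_σ p(σ) a_{k₁₁k₁₂} ⋯ a_{k_{mj_m}k_{m1}}`: each `σ` is
written as a product of disjoint cycles, each cycle starting at its smallest element, the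
cycles arranged by decreasing leading elements; a cycle `(m, σm, …, σ^{l−1}m)` (with `l`
the minimal period of `m`) contributes `a_{m,σm} a_{σm,σ²m} ⋯ a_{σ^{l−1}m,m}`. -/
noncomputable def mooreDet {n : ℕ} (A : Matrix (Fin n) (Fin n) ℍ[ℝ]) : ℍ[ℝ] :=
  ∑ σ : Equiv.Perm (Fin n),
    (((Equiv.Perm.sign σ : ℤˣ) : ℤ) : ℍ[ℝ]) *
      ((((List.finRange n).filter (fun m => decide (∀ t < n, m ≤ (σ ^ t) m))).reverse).map
        (fun m => ((List.range (Function.minimalPeriod σ m)).map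
          (fun t => A ((σ ^ t) m) ((σ ^ (t + 1)) m))).prod)).prod



/-! ### Sums over self-avoiding paths -/

section PathSums

lemma re_sum_quaternion {ι : Type*} (s : Finset ι) (f : ι → ℍ[ℝ]) :
    (∑ i ∈ s, f i).re = ∑ i ∈ s, (f i).re :=
  map_sum (⟨⟨fun q : ℍ[ℝ] => q.re, rfl⟩, fun _ _ => rfl⟩ : ℍ[ℝ] →+ ℝ) f s

variable {ι : Type*} [DecidableEq ι]

/-- The signed sum of the products of the entries of `h` along all self-avoiding paths
`a → x₁ → ⋯ → x_k → c` with intermediate vertices in `S`, each path carrying on its left the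
coefficient `w (S \ {x₁, …, x_k})` and the sign `(-1) ^ k`. The recursion peels off the last
arrow. -/
noncomputable def pathSum (h : Matrix ι ι ℍ[ℝ]) (w : Finset ι → ℍ[ℝ]) (S : Finset ι)
    (a c : ι) : ℍ[ℝ] :=
  w S * h a c - ∑ b : S, pathSum h w (S.erase b) a b * h b c
termination_by S.card
decreasing_by exact Finset.card_erase_lt_of_mem b.2

lemma pathSum_eq (h : Matrix ι ι ℍ[ℝ]) (w : Finset ι → ℍ[ℝ]) (S : Finset ι) (a c : ι) :
    pathSum h w S a c = w S * h a c - ∑ b ∈ S, pathSum h w (S.erase b) a b * h b c := by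
  rw [pathSum, Finset.sum_coe_sort S (fun b => pathSum h w (S.erase b) a b * h b c)]

variable (h : Matrix ι ι ℍ[ℝ])

lemma pathSum_congr {w w' : Finset ι → ℍ[ℝ]} (S : Finset ι) :
    ∀ (_ : ∀ T ⊆ S, w T = w' T) (a c : ι), pathSum h w S a c = pathSum h w' S a c := by
  induction S using Finset.strongInduction with
  | H S ih =>
    intro hw a c
    rw [pathSum_eq, pathSum_eq h w', hw S subset_rfl]
    congr 1
    refine Finset.sum_congr rfl fun b hb => ?_
    rw [ih _ (Finset.erase_ssubset hb) (fun T hT => hw T (hT.trans (Finset.erase_subset _ _)))]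

lemma pathSum_const_mul (z : ℍ[ℝ]) (w : Finset ι → ℍ[ℝ]) (S : Finset ι) :
    ∀ a c : ι, pathSum h (fun T => z * w T) S a c = z * pathSum h w S a c := by
  induction S using Finset.strongInduction with
  | H S ih =>
    intro a c
    rw [pathSum_eq, pathSum_eq h w, mul_sub, Finset.mul_sum, mul_assoc]
    congr 1
    refine Finset.sum_congr rfl fun b hb => ?_
    rw [ih _ (Finset.erase_ssubset hb), mul_assoc]

lemma pathSum_sub (w w' : Finset ι → ℍ[ℝ]) (S : Finset ι) :
    ∀ a c : ι, pathSum h (fun T => w T - w' T) S a c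
      = pathSum h w S a c - pathSum h w' S a c := by
  induction S using Finset.strongInduction with
  | H S ih =>
    intro a c
    rw [pathSum_eq, pathSum_eq h w, pathSum_eq h w', sub_mul]
    have : ∑ b ∈ S, pathSum h (fun T => w T - w' T) (S.erase b) a b * h b c
        = ∑ b ∈ S, pathSum h w (S.erase b) a b * h b c
          - ∑ b ∈ S, pathSum h w' (S.erase b) a b * h b c := by
      rw [← Finset.sum_sub_distrib]
      refine Finset.sum_congr rfl fun b hb => ?_
      rw [ih _ (Finset.erase_ssubset hb), sub_mul]
    rw [this]; abel

lemma sum_erase_comm {M : Type*} [AddCommMonoid M] (S : Finset ι) (f : ι → ι → M) :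
    ∑ b ∈ S, ∑ d ∈ S.erase b, f b d = ∑ d ∈ S, ∑ b ∈ S.erase d, f b d := by
  refine Finset.sum_comm' fun x y => ?_
  simp only [Finset.mem_erase]
  tauto

/-- A coefficient that is itself a sum over the choice of a removed vertex can be expanded after
or before summing over paths. -/
lemma pathSum_sum_erase (w : ι → Finset ι → ℍ[ℝ]) (S : Finset ι) :
    ∀ a c : ι, pathSum h (fun T => ∑ b ∈ T, w b (T.erase b)) S a c
      = ∑ b ∈ S, pathSum h (w b) (S.erase b) a c := by
  induction S using Finset.strongInduction with
  | H S ih =>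
    intro a c
    rw [pathSum_eq]
    have h1 : ∀ e ∈ S, pathSum h (fun T => ∑ b ∈ T, w b (T.erase b)) (S.erase e) a e * h e c
        = ∑ b ∈ S.erase e, pathSum h (w b) ((S.erase b).erase e) a e * h e c := by
      intro e he
      rw [ih _ (Finset.erase_ssubset he), Finset.sum_mul]
      refine Finset.sum_congr rfl fun b _ => ?_
      rw [Finset.erase_right_comm]
    rw [Finset.sum_congr rfl h1, sum_erase_comm, Finset.sum_mul, ← Finset.sum_sub_distrib]
    refine Finset.sum_congr rfl fun b _ => ?_
    rw [pathSum_eq h (w b)]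

/-- Paths through `insert d T` either avoid `d`, or consist of a path to `d` followed by a path
from `d`. -/
lemma pathSum_insert (w : Finset ι → ℍ[ℝ]) (d : ι) (T : Finset ι) (hd : d ∉ T) :
    ∀ a c : ι, pathSum h w (insert d T) a c
      = pathSum h (fun T' => w (insert d T')) T a c
        - pathSum h (fun T' => pathSum h w T' a d) T d c := by
  induction T using Finset.strongInduction with
  | H T ih =>
    intro a c
    rw [pathSum_eq, pathSum_eq h (fun T' => w (insert d T')),
      pathSum_eq h (fun T' => pathSum h w T' a d), Finset.sum_insert hd, Finset.erase_insert hd]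
    have h1 : ∀ b ∈ T, pathSum h w ((insert d T).erase b) a b * h b c
        = pathSum h (fun T' => w (insert d T')) (T.erase b) a b * h b c
        - pathSum h (fun T' => pathSum h w T' a d) (T.erase b) d b * h b c := by
      intro b hb
      have hbd : b ≠ d := fun e => hd (e ▸ hb)
      rw [Finset.erase_insert_of_ne hbd.symm, ih _ (Finset.erase_ssubset hb)
        (fun hh => hd (Finset.mem_of_mem_erase hh)), sub_mul]
    rw [Finset.sum_congr rfl h1, Finset.sum_sub_distrib]
    abel

lemma re_mul_comm (p q : ℍ[ℝ]) : (p * q).re = (q * p).re := by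
  simp only [Quaternion.re_mul]; ring

lemma commute_of_star_eq {m : ℍ[ℝ]} (hm : star m = m) (x : ℍ[ℝ]) : m * x = x * m := by
  rw [Quaternion.star_eq_self.1 hm]
  exact (Quaternion.coe_commutes _ _)

/-- The sum over pairs of disjoint paths `d → e` and `a → c`, closed up to a cycle by `x` and `y`,
has a real part that does not depend on which path is summed first. -/
lemma re_pathSum_pathSum (M : Finset ι → ℍ[ℝ]) (T : Finset ι) :
    ∀ (_ : ∀ T' ⊆ T, star (M T') = M T') (a c d e : ι) (x y : ℍ[ℝ]),
      (y * pathSum h (fun T' => pathSum h M T' d e * x) T a c).re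
        = (x * pathSum h (fun T' => pathSum h M T' a c * y) T d e).re := by
  induction T using Finset.strongInduction with
  | H T ih =>
    intro hM a c d e x y
    have h1 : pathSum h (fun T' => pathSum h M T' a c * y) T d e
        = h a c * y * pathSum h M T d e
          - ∑ b ∈ T, pathSum h (fun T' => pathSum h M T' a b * (h b c * y)) (T.erase b) d e := by
      rw [← pathSum_sum_erase h (fun b T' => pathSum h M T' a b * (h b c * y)),
        ← pathSum_const_mul, ← pathSum_sub]
      refine pathSum_congr h T (fun T' hT' => ?_) d e
      rw [pathSum_eq, sub_mul, Finset.sum_mul, mul_assoc, commute_of_star_eq (hM T' hT')]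
      simp only [mul_assoc]
    rw [h1, pathSum_eq, mul_sub, mul_sub, Quaternion.re_sub, Quaternion.re_sub]
    congr 1
    · rw [show y * (pathSum h M T d e * x * h a c) = (y * pathSum h M T d e) * (x * h a c) by
        simp only [mul_assoc], re_mul_comm]
      simp only [mul_assoc]
    · rw [Finset.mul_sum, Finset.mul_sum]
      rw [re_sum_quaternion, re_sum_quaternion]
      refine Finset.sum_congr rfl fun b hb => ?_
      rw [← mul_assoc, re_mul_comm, ← mul_assoc]
      exact ih _ (Finset.erase_ssubset hb)
        (fun T' hT' => hM T' (hT'.trans (Finset.erase_subset _ _))) a b d e x (h b c * y)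

/-- The recursion that peels off the first arrow, valid for real coefficients. -/
lemma pathSum_eq_left (M : Finset ι → ℍ[ℝ]) (T : Finset ι) :
    ∀ (_ : ∀ T' ⊆ T, star (M T') = M T') (a c : ι),
      pathSum h M T a c = h a c * M T - ∑ b ∈ T, h a b * pathSum h M (T.erase b) b c := by
  induction T using Finset.strongInduction with
  | H T ih =>
    intro hM a c
    rw [pathSum_eq, commute_of_star_eq (hM T subset_rfl)]
    congr 1
    have hM' : ∀ b, ∀ T' ⊆ T.erase b, star (M T') = M T' :=
      fun b T' hT' => hM T' (hT'.trans (Finset.erase_subset _ _))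
    have h1 : ∀ d ∈ T, pathSum h M (T.erase d) a d * h d c
        = h a d * M (T.erase d) * h d c
          - ∑ b ∈ T.erase d, h a b * pathSum h M ((T.erase d).erase b) b d * h d c := by
      intro d hd
      rw [ih _ (Finset.erase_ssubset hd) (hM' d), sub_mul, Finset.sum_mul]
    have h2 : ∀ b ∈ T, h a b * pathSum h M (T.erase b) b c
        = h a b * M (T.erase b) * h b c
          - ∑ d ∈ T.erase b, h a b * pathSum h M ((T.erase d).erase b) b d * h d c := by
      intro b _
      rw [pathSum_eq, mul_sub, Finset.mul_sum, mul_assoc]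
      congr 1
      refine Finset.sum_congr rfl fun d _ => ?_
      rw [Finset.erase_right_comm, mul_assoc]
    rw [Finset.sum_congr rfl h1, Finset.sum_congr rfl h2, Finset.sum_sub_distrib,
      Finset.sum_sub_distrib, sum_erase_comm]

variable {h}

/-- Reversing the paths. -/
lemma star_pathSum (hh : ∀ i j, star (h i j) = h j i) (M : Finset ι → ℍ[ℝ]) (T : Finset ι) :
    ∀ (_ : ∀ T' ⊆ T, star (M T') = M T') (a c : ι),
      star (pathSum h M T a c) = pathSum h M T c a := by
  induction T using Finset.strongInduction with
  | H T ih =>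
    intro hM a c
    rw [pathSum_eq_left h M T hM c a, pathSum_eq, star_sub, star_mul, hh,
      hM T subset_rfl, star_sum]
    congr 1
    refine Finset.sum_congr rfl fun b hb => ?_
    rw [star_mul, hh, ih _ (Finset.erase_ssubset hb)
      (fun T' hT' => hM T' (hT'.trans (Finset.erase_subset _ _)))]

/-- If the function `M` of finite sets expands along the closed paths at one vertex of each
nonempty set, then it is real-valued and expands along the closed paths at every vertex. -/
lemma real_and_expand (hh : ∀ i j, star (h i j) = h j i) (M : Finset ι → ℍ[ℝ])
    (M0 : M ∅ = 1)
    (M1 : ∀ S : Finset ι, S.Nonempty → ∃ a ∈ S, M S = pathSum h M (S.erase a) a a)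
    (S : Finset ι) :
    star (M S) = M S ∧ ∀ c ∈ S, M S = pathSum h M (S.erase c) c c := by
  induction S using Finset.strongInduction with
  | H S ih =>
    rcases S.eq_empty_or_nonempty with rfl | hS
    · simp [M0]
    obtain ⟨a, ha, hMa⟩ := M1 S hS
    have hreal : ∀ c ∈ S, star (pathSum h M (S.erase c) c c) = pathSum h M (S.erase c) c c :=
      fun c hc => star_pathSum hh M _
        (fun T' hT' => (ih T' (lt_of_le_of_lt hT' (Finset.erase_ssubset hc))).1) c c
    refine ⟨by rw [hMa]; exact hreal a ha, fun c hc => ?_⟩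
    rcases eq_or_ne c a with rfl | hca
    · exact hMa
    have key : ∀ a ∈ S, ∀ c ∈ S, c ≠ a → pathSum h M (S.erase a) a a
        = pathSum h (fun T' => pathSum h M T' c c) ((S.erase a).erase c) a a
        - pathSum h (fun T' => pathSum h M T' a c) ((S.erase a).erase c) c a := by
      intro a ha c hc hca
      have hcS : c ∈ S.erase a := Finset.mem_erase.2 ⟨hca, hc⟩
      conv_lhs => rw [← Finset.insert_erase hcS]
      rw [pathSum_insert h M c _ (Finset.notMem_erase _ _)]
      congr 1
      refine pathSum_congr h _ (fun T' hT' => ?_) a a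
      have hcT : c ∉ T' := fun hc' => Finset.notMem_erase _ _ (hT' hc')
      have : insert c T' ⊂ S := by
        refine lt_of_le_of_lt ?_ (Finset.erase_ssubset ha)
        rw [← Finset.insert_erase hcS]
        exact Finset.insert_subset_insert _ hT'
      rw [(ih _ this).2 c (Finset.mem_insert_self _ _), Finset.erase_insert hcT]
    have hre : (pathSum h M (S.erase a) a a).re = (pathSum h M (S.erase c) c c).re := by
      have hM' : ∀ T' ⊆ (S.erase a).erase c, star (M T') = M T' := fun T' hT' =>
        (ih T' (lt_of_le_of_lt (hT'.trans (Finset.erase_subset _ _))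
          (Finset.erase_ssubset ha))).1
      have e1 := re_pathSum_pathSum h M _ hM' a a c c 1 1
      have e2 := re_pathSum_pathSum h M _ hM' c a a c 1 1
      simp only [mul_one, one_mul] at e1 e2
      rw [key a ha c hc hca, key c hc a ha hca.symm, Quaternion.re_sub, Quaternion.re_sub, e1, e2,
        Finset.erase_right_comm]
    rw [hMa, Quaternion.star_eq_self.1 (hreal a ha), Quaternion.star_eq_self.1 (hreal c hc), hre]

/-- The vanishing of a determinant with a repeated row. -/
lemma pathSum_eq_zero (M : Finset ι → ℍ[ℝ])
    (M1 : ∀ S : Finset ι, ∀ c ∈ S, M S = pathSum h M (S.erase c) c c)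
    (S : Finset ι) (a c : ι) (ha : a ∈ S) : pathSum h M S a c = 0 := by
  rw [← Finset.insert_erase ha, pathSum_insert h M a _ (Finset.notMem_erase _ _), sub_eq_zero]
  refine pathSum_congr h _ (fun T' hT' => ?_) a c
  have haT : a ∉ T' := fun hc' => Finset.notMem_erase _ _ (hT' hc')
  rw [M1 _ a (Finset.mem_insert_self _ _), Finset.erase_insert haT]

end PathSums


/-! ### The permutation sum as a sum over closed paths -/

section Cycles

variable {n : ℕ}

open Equiv Equiv.Perm Function

/-- The product of the entries of `A` along the cycle of `σ` starting at `m`. -/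
noncomputable def cycProd (A : Matrix (Fin n) (Fin n) ℍ[ℝ]) (σ : Perm (Fin n)) (m : Fin n) :
    ℍ[ℝ] :=
  ((List.range (minimalPeriod σ m)).map (fun t => A ((σ ^ t) m) ((σ ^ (t + 1)) m))).prod

/-- The product along the cycle `c → σ c → ⋯ → c`, with the starting vertex `c` of the first
arrow replaced by `a`. -/
noncomputable def openProd (A : Matrix (Fin n) (Fin n) ℍ[ℝ]) (σ : Perm (Fin n)) (a c : Fin n) :
    ℍ[ℝ] :=
  ((List.range (minimalPeriod σ c)).map
    (fun t => A (if t = 0 then a else (σ ^ t) c) ((σ ^ (t + 1)) c))).prod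

open Classical in
/-- The product, in decreasing order of the leaders (smallest elements of the cycles of `σ`), of
the cycle products of those leaders that satisfy `p`. -/
noncomputable def leadProd (A : Matrix (Fin n) (Fin n) ℍ[ℝ]) (σ : Perm (Fin n))
    (p : Fin n → Prop) : ℍ[ℝ] :=
  ((((List.finRange n).filter
    (fun m => decide (p m ∧ ∀ t < n, m ≤ (σ ^ t) m))).reverse).map (cycProd A σ)).prod

/-- The permutations that fix every point outside `S`. -/
def permsOn (S : Finset (Fin n)) : Finset (Perm (Fin n)) :=
  Finset.univ.filter fun σ => ∀ x, x ∉ S → σ x = x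

lemma mem_permsOn {S : Finset (Fin n)} {σ : Perm (Fin n)} :
    σ ∈ permsOn S ↔ ∀ x, x ∉ S → σ x = x := by simp [permsOn]

/-- The Moore determinant of the principal submatrix of `A` with index set `S`. -/
noncomputable def mooreOn (A : Matrix (Fin n) (Fin n) ℍ[ℝ]) (S : Finset (Fin n)) : ℍ[ℝ] :=
  ∑ σ ∈ permsOn S, ((sign σ : ℤ) : ℍ[ℝ]) * leadProd A σ (· ∈ S)

/-- The permutation sum on `insert c S` in which the cycle of `c` comes last and is opened up to
a path from `a` to `c`. -/
noncomputable def openMoore (A : Matrix (Fin n) (Fin n) ℍ[ℝ]) (S : Finset (Fin n)) (a c : Fin n) :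
    ℍ[ℝ] :=
  ∑ σ ∈ permsOn (insert c S), ((sign σ : ℤ) : ℍ[ℝ]) *
    (leadProd A σ (fun m => m ∈ S ∧ ¬ SameCycle σ c m) * openProd A σ a c)

lemma mooreDet_eq_mooreOn (A : Matrix (Fin n) (Fin n) ℍ[ℝ]) :
    mooreDet A = mooreOn A Finset.univ := by
  unfold mooreDet mooreOn
  have : permsOn (Finset.univ : Finset (Fin n)) = Finset.univ := by
    ext σ; simp [permsOn]
  rw [this]
  refine Finset.sum_congr rfl fun σ _ => ?_
  unfold leadProd cycProd
  simp

lemma mooreOn_empty (A : Matrix (Fin n) (Fin n) ℍ[ℝ]) : mooreOn A ∅ = 1 := by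
  unfold mooreOn
  have : permsOn (∅ : Finset (Fin n)) = {1} := by
    ext σ
    simp only [mem_permsOn, Finset.mem_singleton, Finset.notMem_empty, not_false_eq_true,
      forall_true_left]
    exact ⟨fun h => Equiv.ext h, fun h x => by simp [h]⟩
  rw [this]
  simp [leadProd]

open Classical in
lemma leadProd_congr (A : Matrix (Fin n) (Fin n) ℍ[ℝ]) {σ τ : Perm (Fin n)} {p q : Fin n → Prop}
    (hpq : ∀ m, p m ↔ q m) (h : ∀ m, p m → ∀ t : ℕ, (σ ^ t) m = (τ ^ t) m) :
    leadProd A σ p = leadProd A τ q := by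
  unfold leadProd
  have h1 : (List.finRange n).filter (fun m => decide (p m ∧ ∀ t < n, m ≤ (σ ^ t) m))
      = (List.finRange n).filter (fun m => decide (q m ∧ ∀ t < n, m ≤ (τ ^ t) m)) := by
    refine List.filter_congr fun m _ => ?_
    rw [decide_eq_decide, ← hpq m]
    refine and_congr_right fun hp => ?_
    simp only [h m hp]
  rw [← h1]
  congr 1
  refine List.map_congr_left fun m hm => ?_
  have hp : p m := by
    simp only [List.mem_reverse, List.mem_filter, decide_eq_true_eq] at hm
    exact hm.2.1
  have hper : minimalPeriod σ m = minimalPeriod τ m := by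
    rw [minimalPeriod_eq_minimalPeriod_iff]
    intro k
    simp only [IsPeriodicPt, IsFixedPt, iterate_eq_pow, h m hp k]
  unfold cycProd
  rw [hper]
  simp only [h m hp]

lemma minimalPeriod_perm_pos (σ : Perm (Fin n)) (c : Fin n) : 0 < minimalPeriod σ c :=
  IsPeriodicPt.minimalPeriod_pos (orderOf_pos σ)
    (by simp [IsPeriodicPt, IsFixedPt, iterate_eq_pow, pow_orderOf_eq_one])

lemma exists_pow_lt_minimalPeriod {σ : Perm (Fin n)} {x y : Fin n} (h : SameCycle σ x y) :
    ∃ t < minimalPeriod σ x, (σ ^ t) x = y := by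
  obtain ⟨i, hi⟩ := h.exists_nat_pow_eq
  refine ⟨i % minimalPeriod σ x, Nat.mod_lt _ (minimalPeriod_perm_pos σ x), ?_⟩
  rw [← hi, ← iterate_eq_pow, ← iterate_eq_pow, iterate_mod_minimalPeriod_eq]

lemma pow_ne_of_lt_minimalPeriod {σ : Perm (Fin n)} {c : Fin n} {t : ℕ} (h0 : t ≠ 0)
    (ht : t < minimalPeriod σ c) : (σ ^ t) c ≠ c :=
  not_isPeriodicPt_of_pos_of_lt_minimalPeriod h0 ht

lemma pow_minimalPeriod (σ : Perm (Fin n)) (c : Fin n) : (σ ^ minimalPeriod σ c) c = c :=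
  isPeriodicPt_minimalPeriod σ c

section Remove

/-! Removing a point `c` from its cycle `⋯ → b → c → σ c → ⋯` yields `σ * swap b c`. -/

variable {σ : Perm (Fin n)} {b c : Fin n}

lemma remove_apply_of_ne {x : Fin n} (hb : x ≠ b) (hc : x ≠ c) :
    (σ * swap b c) x = σ x := by
  rw [Perm.mul_apply, swap_apply_of_ne_of_ne hb hc]

lemma one_lt_minimalPeriod (hσ : σ b = c) (hbc : b ≠ c) : 1 < minimalPeriod σ c := by
  have h0 := minimalPeriod_perm_pos σ c
  have h1 : minimalPeriod σ c ≠ 1 := by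
    rw [Ne, minimalPeriod_eq_one_iff_isFixedPt]
    intro h
    exact hbc (σ.injective (hσ.trans h.symm))
  omega

lemma remove_pow (hσ : σ b = c) (t : ℕ) (ht : t + 1 < minimalPeriod σ c) :
    ((σ * swap b c) ^ (t + 1)) b = (σ ^ (t + 1)) c := by
  induction t with
  | zero => simp
  | succ t ih =>
    rw [pow_succ', Perm.mul_apply, ih (by omega), remove_apply_of_ne, pow_succ' σ (t + 1), Perm.mul_apply]
    · intro h
      refine pow_ne_of_lt_minimalPeriod (t := t + 2) (by omega) ht ?_
      rw [pow_succ', Perm.mul_apply, h, hσ]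
    · exact pow_ne_of_lt_minimalPeriod (by omega) (by omega)

lemma pow_pred_minimalPeriod (hσ : σ b = c) :
    (σ ^ (minimalPeriod σ c - 1)) c = b := by
  apply σ.injective
  rw [hσ, ← Perm.mul_apply, ← pow_succ', Nat.sub_add_cancel (minimalPeriod_perm_pos σ c),
    pow_minimalPeriod]

lemma minimalPeriod_remove (hσ : σ b = c) (hbc : b ≠ c) :
    minimalPeriod (σ * swap b c) b = minimalPeriod σ c - 1 := by
  have hp := one_lt_minimalPeriod hσ hbc
  have hper : IsPeriodicPt (σ * swap b c) (minimalPeriod σ c - 1) b := by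
    rw [IsPeriodicPt, IsFixedPt, iterate_eq_pow]
    have := remove_pow hσ (minimalPeriod σ c - 2) (by omega)
    rw [show minimalPeriod σ c - 2 + 1 = minimalPeriod σ c - 1 by omega] at this
    rw [this, pow_pred_minimalPeriod hσ]
  refine le_antisymm (hper.minimalPeriod_le (by omega)) ?_
  by_contra! hlt
  obtain ⟨t, ht⟩ : ∃ t, minimalPeriod (σ * swap b c) b = t + 1 :=
    ⟨minimalPeriod (σ * swap b c) b - 1, by have := minimalPeriod_perm_pos (σ * swap b c) b; omega⟩
  have h1 := pow_minimalPeriod (σ * swap b c) b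
  rw [ht, remove_pow hσ t (by omega)] at h1
  refine pow_ne_of_lt_minimalPeriod (σ := σ) (c := c) (t := t + 2) (by omega) (by omega) ?_
  rw [pow_succ', Perm.mul_apply, h1, hσ]

lemma openProd_remove (A : Matrix (Fin n) (Fin n) ℍ[ℝ]) (a : Fin n) (hσ : σ b = c) (hbc : b ≠ c) :
    openProd A σ a c = openProd A (σ * swap b c) a b * A b c := by
  have hp := one_lt_minimalPeriod hσ hbc
  obtain ⟨k, hk⟩ : ∃ k, minimalPeriod σ c = k + 2 := ⟨minimalPeriod σ c - 2, by omega⟩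
  have hb := pow_pred_minimalPeriod hσ
  have hc := pow_minimalPeriod σ c
  unfold openProd
  rw [minimalPeriod_remove hσ hbc, hk, show k + 2 - 1 = k + 1 by omega, List.range_succ,
    List.map_append, List.prod_append]
  rw [hk, show k + 2 - 1 = k + 1 by omega] at hb
  rw [hk] at hc
  simp only [List.map_cons, List.map_nil, List.prod_singleton, Nat.succ_ne_zero, if_false, hb, hc]
  congr 2
  refine List.map_congr_left fun t ht => ?_
  rw [List.mem_range] at ht
  rw [remove_pow hσ t (by omega)]
  rcases t with _ | t
  · rfl
  · rw [remove_pow hσ t (by omega)]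

lemma pow_eq_remove_pow (hσ : σ b = c) {m : Fin n} (hm : ¬ SameCycle σ c m) (t : ℕ) :
    (σ ^ t) m = ((σ * swap b c) ^ t) m := by
  induction t with
  | zero => rfl
  | succ t ih =>
    have h2 : SameCycle σ m ((σ ^ t) m) := ⟨t, by simp⟩
    rw [pow_succ', pow_succ', Perm.mul_apply, Perm.mul_apply, ← ih, remove_apply_of_ne]
    · intro h
      refine hm (SameCycle.symm (h2.trans ⟨1, ?_⟩))
      rw [h, zpow_one, hσ]
    · intro h
      exact hm (SameCycle.symm (h ▸ h2))

lemma sameCycle_remove_iff (hσ : σ b = c) {m : Fin n} (hm : m ≠ c) :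
    SameCycle (σ * swap b c) b m ↔ SameCycle σ c m := by
  constructor
  · intro h
    by_contra hcon
    obtain ⟨t, ht⟩ := h.symm.exists_nat_pow_eq
    rw [← pow_eq_remove_pow hσ hcon] at ht
    refine hcon (SameCycle.symm ⟨(t + 1 : ℕ), ?_⟩)
    rw [zpow_natCast, pow_succ', Perm.mul_apply, ht, hσ]
  · intro h
    obtain ⟨t, ht, rfl⟩ := exists_pow_lt_minimalPeriod h
    rcases t with _ | t
    · exact absurd rfl hm
    · exact ⟨(t + 1 : ℕ), by rw [zpow_natCast, remove_pow hσ t ht]⟩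

end Remove

lemma leadProd_remove (A : Matrix (Fin n) (Fin n) ℍ[ℝ]) {σ : Perm (Fin n)} {b c : Fin n}
    {S : Finset (Fin n)} (hσ : σ b = c) (hcS : c ∉ S) :
    leadProd A σ (fun m => m ∈ S ∧ ¬ SameCycle σ c m)
      = leadProd A (σ * swap b c)
        (fun m => m ∈ S.erase b ∧ ¬ SameCycle (σ * swap b c) b m) := by
  refine leadProd_congr A (fun m => ?_) (fun m hm t => pow_eq_remove_pow hσ hm.2 t)
  constructor
  · rintro ⟨h1, h2⟩
    have hmc : m ≠ c := fun e => hcS (e ▸ h1)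
    rw [← sameCycle_remove_iff hσ hmc] at h2
    exact ⟨Finset.mem_erase.2 ⟨fun e => h2 (e ▸ SameCycle.refl _ _), h1⟩, h2⟩
  · rintro ⟨h1, h2⟩
    have h1 := Finset.mem_of_mem_erase h1
    have hmc : m ≠ c := fun e => hcS (e ▸ h1)
    rw [sameCycle_remove_iff hσ hmc] at h2
    exact ⟨h1, h2⟩

/-- Expansion of `openMoore` according to the predecessor of `c`: the sums `openMoore` obey the
recursion of `pathSum`. -/
lemma openMoore_eq (A : Matrix (Fin n) (Fin n) ℍ[ℝ]) (S : Finset (Fin n)) (a c : Fin n)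
    (hc : c ∉ S) :
    openMoore A S a c
      = mooreOn A S * A a c - ∑ b ∈ S, openMoore A (S.erase b) a b * A b c := by
  have hmaps : ∀ σ ∈ permsOn (insert c S), σ⁻¹ c ∈ insert c S := by
    intro σ hσ
    by_contra h
    have h1 := mem_permsOn.1 hσ _ h
    rw [← Perm.mul_apply, mul_inv_cancel, Perm.one_apply] at h1
    exact h (h1 ▸ Finset.mem_insert_self _ _)
  rw [openMoore, ← Finset.sum_fiberwise_of_maps_to hmaps, Finset.sum_insert hc, sub_eq_add_neg,
    ← Finset.sum_neg_distrib]
  congr 1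
  · have : (permsOn (insert c S)).filter (fun σ => σ⁻¹ c = c) = permsOn S := by
      ext σ
      simp only [Finset.mem_filter, mem_permsOn, Finset.mem_insert, not_or, inv_eq_iff_eq]
      constructor
      · rintro ⟨h1, h2⟩ x hx
        by_cases hxc : x = c
        · rw [hxc, ← h2]
        · exact h1 x ⟨hxc, hx⟩
      · exact fun h => ⟨fun x hx => h x hx.2, (h c hc).symm⟩
    rw [this, mooreOn, Finset.sum_mul]
    refine Finset.sum_congr rfl fun σ hσ => ?_
    have hfix : σ c = c := mem_permsOn.1 hσ c hc
    have hper : minimalPeriod σ c = 1 := minimalPeriod_eq_one_iff_isFixedPt.2 hfix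
    have ho : openProd A σ a c = A a c := by
      unfold openProd
      rw [hper]
      simp [hfix]
    rw [ho, ← mul_assoc]
    congr 2
    refine leadProd_congr A (fun m => ⟨fun h => h.1, fun h => ⟨h, fun hs => ?_⟩⟩) fun _ _ _ => rfl
    exact hc (hs.eq_of_left hfix ▸ h)
  · refine Finset.sum_congr rfl fun b hb => ?_
    have hbc : b ≠ c := fun e => hc (e ▸ hb)
    rw [openMoore, Finset.insert_erase hb, Finset.sum_mul, ← Finset.sum_neg_distrib]
    refine Finset.sum_bij' (fun σ _ => σ * swap b c) (fun σ _ => σ * swap b c) ?_ ?_ ?_ ?_ ?_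
    · intro σ hσ
      rw [Finset.mem_filter, mem_permsOn, inv_eq_iff_eq] at hσ
      rw [mem_permsOn]
      intro x hx
      by_cases hxc : x = c
      · rw [hxc, Perm.mul_apply, swap_apply_right, ← hσ.2]
      · rw [remove_apply_of_ne (fun e : x = b => hx (e ▸ hb)) hxc]
        exact hσ.1 x (by simp [hxc, hx])
    · intro σ hσ
      rw [mem_permsOn] at hσ
      rw [Finset.mem_filter, mem_permsOn, inv_eq_iff_eq]
      refine ⟨fun x hx => ?_, ?_⟩
      · rw [Finset.mem_insert, not_or] at hx
        rw [remove_apply_of_ne (fun e : x = b => hx.2 (e ▸ hb)) hx.1]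
        exact hσ x hx.2
      · rw [Perm.mul_apply, swap_apply_left, hσ c hc]
    · intro σ _
      simp [mul_assoc]
    · intro σ _
      simp [mul_assoc]
    · intro σ hσ
      rw [Finset.mem_filter, inv_eq_iff_eq] at hσ
      have hσ' : σ b = c := hσ.2.symm
      rw [leadProd_remove A hσ' hc, openProd_remove A a hσ' hbc, Perm.sign_mul, sign_swap hbc]
      simp [mul_assoc]

lemma filter_finRange_eq_cons {p q : Fin n → Bool} {a : Fin n} (hpa : p a = true)
    (hle : ∀ m, p m = true → a ≤ m) (hq : ∀ m, q m = true ↔ p m = true ∧ m ≠ a) :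
    (List.finRange n).filter p = a :: (List.finRange n).filter q := by
  have hs : ∀ r : Fin n → Bool, ((List.finRange n).filter r).Pairwise (· ≤ ·) := fun r =>
    (List.pairwise_le_finRange n).sublist List.filter_sublist
  refine List.Perm.eq_of_pairwise' (r := (· ≤ ·)) (hs p) ?_ ?_
  · refine List.pairwise_cons.2 ⟨fun m hm => ?_, hs q⟩
    exact hle m ((hq m).1 (List.mem_filter.1 hm).2).1
  · rw [List.perm_ext_iff_of_nodup ((List.nodup_finRange n).filter _)]
    · intro m
      simp only [List.mem_filter, List.mem_finRange, true_and, List.mem_cons, hq]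
      by_cases h : m = a
      · simp [h, hpa]
      · simp [h]
    · refine List.nodup_cons.2 ⟨fun h => ?_, (List.nodup_finRange n).filter _⟩
      exact ((hq a).1 (List.mem_filter.1 h).2).2 rfl

lemma pow_mem_of_mem_permsOn {S : Finset (Fin n)} {σ : Perm (Fin n)} (hσ : σ ∈ permsOn S)
    {x : Fin n} (hx : x ∈ S) (t : ℕ) : (σ ^ t) x ∈ S := by
  induction t with
  | zero => exact hx
  | succ t ih =>
    rw [pow_succ', Perm.mul_apply]
    by_contra h
    exact h (by rw [σ.injective (mem_permsOn.1 hσ _ h)]; exact ih)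

/-- The last factor of the Moore product is the cycle of the smallest index. -/
lemma mooreOn_eq_openMoore (A : Matrix (Fin n) (Fin n) ℍ[ℝ]) (S : Finset (Fin n))
    (a : Fin n) (ha : a ∈ S) (hmin : ∀ m ∈ S, a ≤ m) :
    mooreOn A S = openMoore A (S.erase a) a a := by
  rw [mooreOn, openMoore, Finset.insert_erase ha]
  refine Finset.sum_congr rfl fun σ hσ => ?_
  congr 1
  have ho : openProd A σ a a = cycProd A σ a := by
    unfold openProd cycProd
    congr 1
    refine List.map_congr_left fun t _ => ?_
    split_ifs with h
    · simp [h]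
    · rfl
  rw [ho, leadProd, leadProd, filter_finRange_eq_cons (a := a), List.reverse_cons,
    List.map_append, List.prod_append, List.map_singleton, List.prod_singleton]
  · simp only [decide_eq_true_eq]
    exact ⟨ha, fun t _ => hmin _ (pow_mem_of_mem_permsOn hσ ha t)⟩
  · intro m hm
    simp only [decide_eq_true_eq] at hm
    exact hmin m hm.1
  · intro m
    simp only [decide_eq_true_eq, Finset.mem_erase]
    constructor
    · rintro ⟨⟨⟨h1, h2⟩, h3⟩, h4⟩
      exact ⟨⟨h2, h4⟩, h1⟩
    · rintro ⟨⟨h2, h4⟩, h1⟩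
      refine ⟨⟨⟨h1, h2⟩, fun hs => h1 ?_⟩, h4⟩
      obtain ⟨t, ht, hta⟩ := exists_pow_lt_minimalPeriod hs.symm
      have hn : minimalPeriod σ m ≤ n := by
        simpa using (minimalPeriod_le_card (f := σ) (x := m))
      refine le_antisymm ?_ (hmin m h2)
      rw [← hta]
      exact h4 t (lt_of_lt_of_le ht hn)

lemma openMoore_eq_pathSum (A : Matrix (Fin n) (Fin n) ℍ[ℝ]) (S : Finset (Fin n)) :
    ∀ (a c : Fin n), c ∉ S → openMoore A S a c = pathSum A (mooreOn A) S a c := by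
  induction S using Finset.strongInduction with
  | H S ih =>
    intro a c hc
    rw [openMoore_eq A S a c hc, pathSum_eq]
    congr 1
    refine Finset.sum_congr rfl fun b hb => ?_
    rw [ih _ (Finset.erase_ssubset hb) a b (Finset.notMem_erase _ _)]

lemma mooreOn_real_and_expand {A : Matrix (Fin n) (Fin n) ℍ[ℝ]}
    (hA : ∀ i j, star (A i j) = A j i) (S : Finset (Fin n)) :
    star (mooreOn A S) = mooreOn A S ∧
      ∀ c ∈ S, mooreOn A S = pathSum A (mooreOn A) (S.erase c) c c := by
  refine real_and_expand hA (mooreOn A) (mooreOn_empty A) (fun S hS => ?_) S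
  refine ⟨S.min' hS, S.min'_mem hS, ?_⟩
  rw [mooreOn_eq_openMoore A S _ (S.min'_mem hS) fun m hm => S.min'_le m hm,
    openMoore_eq_pathSum _ _ _ _ (Finset.notMem_erase _ _)]

end Cycles


/-! ### The Study determinant -/

section Study

variable {n : ℕ}

lemma thetaQ_one : thetaQ 1 = 1 := by
  ext i j; fin_cases i <;> fin_cases j <;> simp [thetaQ]

lemma thetaQ_zero : thetaQ 0 = 0 := by
  ext i j; fin_cases i <;> fin_cases j <;> simp [thetaQ]

lemma thetaQ_add (p q : ℍ[ℝ]) : thetaQ (p + q) = thetaQ p + thetaQ q := by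
  ext i j; fin_cases i <;> fin_cases j <;> apply Complex.ext <;> simp [thetaQ] <;> ring

lemma thetaQ_mul (p q : ℍ[ℝ]) : thetaQ (p * q) = thetaQ p * thetaQ q := by
  ext i j
  fin_cases i <;> fin_cases j <;> apply Complex.ext <;>
    simp [thetaQ, Matrix.mul_apply, Fin.sum_univ_two] <;> ring

lemma thetaQ_star (p : ℍ[ℝ]) : thetaQ (star p) = (thetaQ p)ᴴ := by
  ext i j; fin_cases i <;> fin_cases j <;> apply Complex.ext <;> simp [thetaQ]

lemma det_thetaQ (p : ℍ[ℝ]) : (thetaQ p).det = ((Quaternion.normSq p : ℝ) : ℂ) := by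
  rw [Matrix.det_fin_two]
  apply Complex.ext <;> simp [thetaQ, Quaternion.normSq_def', pow_two] <;> ring

/-- `thetaQ` as a ring homomorphism. -/
noncomputable def thetaHom : ℍ[ℝ] →+* Matrix (Fin 2) (Fin 2) ℂ where
  toFun := thetaQ
  map_one' := thetaQ_one
  map_zero' := thetaQ_zero
  map_add' := thetaQ_add
  map_mul' := thetaQ_mul

lemma thetaN_eq (A : Matrix (Fin n) (Fin n) ℍ[ℝ]) :
    thetaN A = Matrix.compRingEquiv (Fin n) (Fin 2) ℂ (thetaHom.mapMatrix A) := rfl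

lemma studyDet_mul (A B : Matrix (Fin n) (Fin n) ℍ[ℝ]) :
    studyDet (A * B) = studyDet A * studyDet B := by
  simp only [studyDet, thetaN_eq, map_mul, Matrix.det_mul]

lemma studyDet_one : studyDet (1 : Matrix (Fin n) (Fin n) ℍ[ℝ]) = 1 := by
  simp only [studyDet, thetaN_eq, map_one, Matrix.det_one]

lemma studyDet_conjTranspose (A : Matrix (Fin n) (Fin n) ℍ[ℝ]) :
    studyDet Aᴴ = star (studyDet A) := by
  rw [studyDet, studyDet, ← Matrix.det_conjTranspose]
  congr 1
  ext p q
  simp only [thetaN, Matrix.conjTranspose_apply, thetaQ_star]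

lemma studyDet_row {X : Matrix (Fin n) (Fin n) ℍ[ℝ]} (a : Fin n)
    (hX : ∀ i, i ≠ a → ∀ j, X i j = if i = j then 1 else 0) :
    studyDet X = ((Quaternion.normSq (X a a) : ℝ) : ℂ) := by
  rw [studyDet, Matrix.twoBlockTriangular_det (thetaN X) (fun p => p.1 = a)]
  · have h2 : toSquareBlockProp (thetaN X) (fun p => ¬ p.1 = a) = 1 := by
      ext ⟨⟨i, k⟩, hi⟩ ⟨⟨j, l⟩, hj⟩
      change thetaQ (X i j) k l = _
      simp only [hX i hi, Matrix.one_apply, Subtype.mk.injEq, Prod.mk.injEq]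
      by_cases hij : i = j
      · simp [hij, thetaQ_one, Matrix.one_apply]
      · simp [hij, thetaQ_zero]
    rw [h2, Matrix.det_one, mul_one, ← det_thetaQ]
    let e : Fin 2 ≃ {p : Fin n × Fin 2 // p.1 = a} :=
      { toFun := fun k => ⟨(a, k), rfl⟩
        invFun := fun p => p.1.2
        left_inv := fun _ => rfl
        right_inv := by rintro ⟨⟨i, k⟩, rfl⟩; rfl }
    rw [← Matrix.det_submatrix_equiv_self e]
    rfl
  · rintro ⟨i, k⟩ hi ⟨j, l⟩ hj
    have hij : i ≠ j := fun e => hi (e.trans hj)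
    simp [thetaN, hX i hi, hij, thetaQ_zero]

lemma studyDet_col {X : Matrix (Fin n) (Fin n) ℍ[ℝ]} (a : Fin n)
    (hX : ∀ j, j ≠ a → ∀ i, X i j = if i = j then 1 else 0) :
    studyDet X = ((Quaternion.normSq (X a a) : ℝ) : ℂ) := by
  have h1 := studyDet_conjTranspose Xᴴ
  rw [Matrix.conjTranspose_conjTranspose, studyDet_row (X := Xᴴ) a] at h1
  · simpa using h1
  · intro i hi j
    rw [Matrix.conjTranspose_apply, hX i hi]
    by_cases h : j = i
    · simp [h]
    · simp [h, Ne.symm h]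

lemma continuous_studyDet : Continuous (studyDet : Matrix (Fin n) (Fin n) ℍ[ℝ] → ℂ) := by
  unfold studyDet
  refine Continuous.matrix_det (continuous_matrix fun p q => ?_)
  have h : Continuous fun A : Matrix (Fin n) (Fin n) ℍ[ℝ] => A p.1 q.1 := by fun_prop
  have h2 : ∀ k l : Fin 2, Continuous fun x : ℍ[ℝ] => thetaQ x k l := by
    intro k l
    have h1 := Quaternion.continuous_re
    have h2 := Quaternion.continuous_imI
    have h3 := Quaternion.continuous_imJ
    have h4 := Quaternion.continuous_imK
    fin_cases k <;> fin_cases l <;> simp [thetaQ] <;> fun_prop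
  exact (h2 p.2 q.2).comp h

open scoped ComplexOrder

/-- Gaussian elimination with pivot `A a a`. -/
lemma studyDet_pivot (A : Matrix (Fin n) (Fin n) ℍ[ℝ]) (a : Fin n) (ha : A a a ≠ 0) :
    studyDet A = ((Quaternion.normSq (A a a) : ℝ) : ℂ) *
      studyDet (fun i j => if i = a ∨ j = a then (if i = j then 1 else 0)
        else A i j - A i a * (A a a)⁻¹ * A a j : Matrix (Fin n) (Fin n) ℍ[ℝ]) := by
  set B : Matrix (Fin n) (Fin n) ℍ[ℝ] := fun i j =>
    if i = a ∨ j = a then (if i = j then 1 else 0)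
        else A i j - A i a * (A a a)⁻¹ * A a j with hB
  -- `A = L * (B * R)`, with `L` and `R` the identity outside column `a` and row `a`.
  let L : Matrix (Fin n) (Fin n) ℍ[ℝ] := fun i j =>
    if j = a then A i a * (A a a)⁻¹ else if i = j then 1 else 0
  let R : Matrix (Fin n) (Fin n) ℍ[ℝ] := fun i j =>
    if i = a then A a j else if i = j then 1 else 0
  have hBR : ∀ i j, (B * R) i j = if i = a then A a j else
      if j = a then 0 else A i j - A i a * (A a a)⁻¹ * A a j := by
    intro i j
    rw [Matrix.mul_apply]
    by_cases hi : i = a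
    · subst hi
      rw [Finset.sum_eq_single i]
      · simp [hB, R]
      · intro k _ hk
        simp [hB, Ne.symm hk]
      · simp
    · by_cases hj : j = a
      · subst hj
        rw [Finset.sum_eq_zero]
        · simp [hi]
        · intro k _
          by_cases hk : k = j <;> simp [hB, R, hk, hi]
      · rw [Finset.sum_eq_single j]
        · simp [hB, R, hi, hj]
        · intro k _ hk
          by_cases hka : k = a <;> simp [hB, R, hk, hi, hka]
        · simp
  have hA : A = L * (B * R) := by
    refine Matrix.ext fun i j => ?_
    rw [Matrix.mul_apply]
    simp only [hBR]
    by_cases hi : i = a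
    · subst hi
      rw [Finset.sum_eq_single i]
      · simp [L, ha]
      · intro k _ hk
        simp [L, hk, Ne.symm hk]
      · simp
    · rw [Finset.sum_eq_add (a := a) (b := i) (Ne.symm hi)]
      · by_cases hj : j = a
        · subst hj; simp [L, hi, ha]
        · simp [L, hi, hj]
      · rintro k _ ⟨hka, hki⟩
        simp [L, hka, Ne.symm hki]
      · simp
      · simp
  have hL : studyDet L = 1 := by
    rw [studyDet_col a]
    · simp [L, ha]
    · intro j hj i; simp [L, hj]
  have hR : studyDet R = ((Quaternion.normSq (A a a) : ℝ) : ℂ) := by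
    rw [studyDet_row a]
    · simp [R]
    · intro i hi j; simp [R, hi]
  conv_lhs => rw [hA]
  rw [studyDet_mul, studyDet_mul, hL, hR, one_mul, mul_comm]

/-- Induction on the set `S` of indices outside of which `A` is the identity; a vanishing pivot is
perturbed. -/
lemma studyDet_nonneg_aux (S : Finset (Fin n)) :
    ∀ A : Matrix (Fin n) (Fin n) ℍ[ℝ],
      (∀ i j, (i ∉ S ∨ j ∉ S) → A i j = if i = j then 1 else 0) → 0 ≤ studyDet A := by
  induction S using Finset.induction_on with
  | empty =>
    intro A hA
    have : A = 1 := by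
      refine Matrix.ext fun i j => ?_
      rw [hA i j (by simp), Matrix.one_apply]
    rw [this, studyDet_one]
    exact zero_le_one
  | insert a S ha ih =>
    have main : ∀ A : Matrix (Fin n) (Fin n) ℍ[ℝ],
        (∀ i j, (i ∉ insert a S ∨ j ∉ insert a S) → A i j = if i = j then 1 else 0) →
        A a a ≠ 0 → 0 ≤ studyDet A := by
      intro A hA h0
      rw [studyDet_pivot A a h0]
      refine mul_nonneg ?_ (ih _ ?_)
      · exact_mod_cast Quaternion.normSq_nonneg
      · intro i j hij
        by_cases h : i = a ∨ j = a
        · simp [h]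
        · rw [not_or] at h
          have hij' : i ∉ insert a S ∨ j ∉ insert a S := by simpa [h.1, h.2] using hij
          simp only [h.1, h.2, or_self, if_false]
          rw [hA i j hij']
          rcases hij' with hi | hj
          · rw [hA i a (Or.inl hi)]; simp [h.1]
          · rw [hA a j (Or.inr hj)]; simp [Ne.symm h.2]
    intro A hA
    by_cases h0 : A a a = 0
    · let E : ℝ → Matrix (Fin n) (Fin n) ℍ[ℝ] := fun t => A + Matrix.single a a (t : ℍ[ℝ])
      have hE : Continuous E := by
        refine continuous_const.add (continuous_matrix fun i j => ?_)
        simp only [Matrix.single_apply]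
        split_ifs
        · exact Quaternion.continuous_coe
        · exact continuous_const
      have hlim : Filter.Tendsto (fun t => studyDet (E t)) (nhdsWithin 0 (Set.Ioi 0))
          (nhds (studyDet A)) := by
        have h := ((continuous_studyDet.comp hE).tendsto 0).mono_left
          (nhdsWithin_le_nhds (s := Set.Ioi (0 : ℝ)))
        simpa [E, Function.comp_def] using h
      refine ge_of_tendsto hlim ?_
      filter_upwards [self_mem_nhdsWithin] with t ht
      refine main _ (fun i j hij => ?_) ?_
      · have : ¬ (a = i ∧ a = j) := by
          rintro ⟨rfl, rfl⟩
          simp at hij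
        simp only [E, Matrix.add_apply, Matrix.single_apply, this, if_false, add_zero]
        exact hA i j hij
      · have ht' : t ≠ 0 := ne_of_gt ht
        simp only [E, Matrix.add_apply, h0, zero_add, Matrix.single_apply, and_self, if_true]
        exact fun h => ht' (Quaternion.coe_injective (h.trans Quaternion.coe_zero.symm))
    · exact main A hA h0

lemma studyDet_nonneg (A : Matrix (Fin n) (Fin n) ℍ[ℝ]) : 0 ≤ studyDet A :=
  studyDet_nonneg_aux Finset.univ A (by simp)

end Study


/-! ### Comparison for positive definite matrices, and the limit -/

section Compare

variable {n : ℕ}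

/-- The matrix that agrees with `H` on `S × S` and with the identity elsewhere. -/
noncomputable def principal (H : Matrix (Fin n) (Fin n) ℍ[ℝ]) (S : Finset (Fin n)) :
    Matrix (Fin n) (Fin n) ℍ[ℝ] :=
  fun i j => if i ∈ S ∧ j ∈ S then H i j else if i = j then 1 else 0

/-- The `c`-th column of the adjugate of the principal submatrix of `H` with index set
`insert c S`, extended by zero. -/
noncomputable def adjCol (H : Matrix (Fin n) (Fin n) ℍ[ℝ]) (S : Finset (Fin n)) (c : Fin n) :
    Fin n → ℍ[ℝ] :=
  fun b => if b = c then mooreOn H S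
    else if b ∈ S then -pathSum H (mooreOn H) (S.erase b) b c else 0

variable {H : Matrix (Fin n) (Fin n) ℍ[ℝ]}

/-- On the rows in `insert c S`, the product of `H` with `adjCol H S c` is the Moore determinant
of `insert c S` times the basis vector of `c`. -/
lemma sum_mul_adjCol (hH : ∀ i j, star (H i j) = H j i) {S : Finset (Fin n)} {c : Fin n}
    (hc : c ∉ S) {a : Fin n} (ha : a ∈ insert c S) :
    ∑ b, H a b * adjCol H S c b = if a = c then mooreOn H (insert c S) else 0 := by
  have h1 : ∑ b, H a b * adjCol H S c b = pathSum H (mooreOn H) S a c := by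
    rw [pathSum_eq_left H _ S fun T _ => (mooreOn_real_and_expand hH T).1]
    rw [← Finset.sum_subset (Finset.subset_univ (insert c S)), Finset.sum_insert hc,
      sub_eq_add_neg, ← Finset.sum_neg_distrib]
    · congr 1
      · simp [adjCol]
      · refine Finset.sum_congr rfl fun b hb => ?_
        have hbc : b ≠ c := fun e => hc (e ▸ hb)
        simp [adjCol, hbc, hb]
    · intro b _ hb
      rw [Finset.mem_insert, not_or] at hb
      simp [adjCol, hb.1, hb.2]
  rw [h1]
  split_ifs with hac
  · subst hac
    rw [(mooreOn_real_and_expand hH (insert a S)).2 a (Finset.mem_insert_self _ _),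
      Finset.erase_insert hc]
  · exact pathSum_eq_zero _ (fun T => (mooreOn_real_and_expand hH T).2) S a c
      ((Finset.mem_insert.1 ha).resolve_left hac)

lemma mooreOn_coe_re (hH : ∀ i j, star (H i j) = H j i) (S : Finset (Fin n)) :
    mooreOn H S = ((mooreOn H S).re : ℍ[ℝ]) :=
  Quaternion.star_eq_self.1 (mooreOn_real_and_expand hH S).1

/-- Evaluating the Hermitian form at `adjCol H S c` gives `mooreOn H S * mooreOn H (insert c S)`,
whence positivity propagates from `S` to `insert c S`. -/
lemma mooreOn_pos (hH : ∀ i j, star (H i j) = H j i)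
    (hpos : ∀ v : Fin n → ℍ[ℝ], v ≠ 0 → 0 < (∑ a, star (v a) * ∑ b, H a b * v b).re)
    (S : Finset (Fin n)) : 0 < (mooreOn H S).re := by
  induction S using Finset.induction_on with
  | empty => simp [mooreOn_empty]
  | insert c S hc ih =>
    have hv : adjCol H S c ≠ 0 := by
      intro h
      have h1 := congrFun h c
      simp only [adjCol, if_true, Pi.zero_apply] at h1
      rw [h1] at ih
      simp at ih
    have h2 : ∑ a, star (adjCol H S c a) * ∑ b, H a b * adjCol H S c b
        = mooreOn H S * mooreOn H (insert c S) := by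
      rw [Finset.sum_eq_single c]
      · rw [sum_mul_adjCol hH hc (Finset.mem_insert_self _ _)]
        simp [adjCol, (mooreOn_real_and_expand hH S).1]
      · intro a _ hac
        by_cases ha : a ∈ S
        · rw [sum_mul_adjCol hH hc (Finset.mem_insert_of_mem ha)]
          simp [hac]
        · simp [adjCol, hac, ha]
      · simp
    have h3 := hpos _ hv
    rw [h2, mooreOn_coe_re hH S, mooreOn_coe_re hH (insert c S), ← Quaternion.coe_mul,
      Quaternion.re_coe] at h3
    exact pos_of_mul_pos_right h3 ih.le

/-- The adjugate column turns the column `c` of `principal H (insert c S)` into a multiple of a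
basis vector, so that `mooreOn H S ^ 2 * studyDet (principal H (insert c S))` equals
`mooreOn H (insert c S) ^ 2 * studyDet (principal H S)`. -/
lemma studyDet_principal (hH : ∀ i j, star (H i j) = H j i)
    (hpos : ∀ v : Fin n → ℍ[ℝ], v ≠ 0 → 0 < (∑ a, star (v a) * ∑ b, H a b * v b).re)
    (S : Finset (Fin n)) : studyDet (principal H S) = (((mooreOn H S).re ^ 2 : ℝ) : ℂ) := by
  induction S using Finset.induction_on with
  | empty =>
    have : principal H ∅ = 1 := by
      refine Matrix.ext fun i j => ?_
      simp [principal, Matrix.one_apply]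
    simp [this, studyDet_one, mooreOn_empty]
  | insert c S hc ih =>
    let U : Matrix (Fin n) (Fin n) ℍ[ℝ] := fun i j =>
      if j = c then adjCol H S c i else if i = j then 1 else 0
    let X : Matrix (Fin n) (Fin n) ℍ[ℝ] := fun i j =>
      if i = c then (if j = c then mooreOn H (insert c S) else principal H (insert c S) c j)
      else if i = j then 1 else 0
    have hUX : principal H (insert c S) * U = principal H S * X := by
      refine Matrix.ext fun i j => ?_
      have hR : (principal H S * X) i j = if i = c then X c j else
          if j = c then 0 else principal H S i j := by
        rw [Matrix.mul_apply]
        split_ifs with hi hj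
        · subst hi
          rw [Finset.sum_eq_single i]
          · simp [principal, hc]
          · intro k _ hk
            simp [principal, hc, Ne.symm hk]
          · simp
        · subst hj
          refine Finset.sum_eq_zero fun k _ => ?_
          by_cases hk : k = j
          · subst hk; simp [principal, hc, hi]
          · simp [X, hk]
        · rw [Finset.sum_eq_single j]
          · simp [X, hj]
          · intro k _ hk
            by_cases hkc : k = c
            · subst hkc; simp [principal, hc, hi]
            · simp [X, hkc, hk]
          · simp
      rw [hR, Matrix.mul_apply]
      by_cases hj : j = c
      · subst hj
        by_cases hi : i ∈ insert j S
        · have h1 : ∑ k, principal H (insert j S) i k * U k j = ∑ k, H i k * adjCol H S j k := by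
            refine Finset.sum_congr rfl fun k _ => ?_
            by_cases hk : k ∈ insert j S
            · simp only [U, principal, hi, hk, and_self, if_true]
            · have hk' := hk
              rw [Finset.mem_insert, not_or] at hk'
              simp [U, adjCol, hk'.1, hk'.2]
          rw [h1, sum_mul_adjCol hH hc hi]
          simp [X]
        · have hi' := hi
          rw [Finset.mem_insert, not_or] at hi'
          rw [Finset.sum_eq_single i]
          · simp [U, adjCol, hi'.1, hi'.2]
          · intro k _ hk
            simp [principal, hi, Ne.symm hk]
          · simp
      · rw [Finset.sum_eq_single j]
        · by_cases hi : i = c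
          · simp [U, X, hi, hj]
          · simp [U, principal, hi, hj]
        · intro k _ hk
          simp [U, hj, hk]
        · simp
    have h1 := congrArg studyDet hUX
    have hdU : studyDet U = (((mooreOn H S).re ^ 2 : ℝ) : ℂ) := by
      rw [studyDet_col c]
      · simp only [U, if_true, adjCol]
        conv_lhs => rw [mooreOn_coe_re hH S]
        rw [Quaternion.normSq_coe]
      · intro j hj i; simp [U, hj]
    have hdX : studyDet X = (((mooreOn H (insert c S)).re ^ 2 : ℝ) : ℂ) := by
      rw [studyDet_row c]
      · simp only [X, if_true]
        conv_lhs => rw [mooreOn_coe_re hH (insert c S)]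
        rw [Quaternion.normSq_coe]
      · intro i hi j; simp [X, hi]
    rw [studyDet_mul, studyDet_mul, hdU, hdX, ih, mul_comm] at h1
    refine mul_left_cancel₀ ?_ h1
    have := mooreOn_pos hH hpos S
    exact_mod_cast (pow_pos this 2).ne'

lemma studyDet_eq_sq (hH : ∀ i j, star (H i j) = H j i)
    (hpos : ∀ v : Fin n → ℍ[ℝ], v ≠ 0 → 0 < (∑ a, star (v a) * ∑ b, H a b * v b).re) :
    0 ≤ (mooreDet H).re ∧ studyDet H = (((mooreDet H).re ^ 2 : ℝ) : ℂ) := by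
  have h : principal H Finset.univ = H := Matrix.ext fun i j => by simp [principal]
  rw [mooreDet_eq_mooreOn]
  refine ⟨(mooreOn_pos hH hpos _).le, ?_⟩
  rw [← studyDet_principal hH hpos, h]

lemma continuous_mooreDet : Continuous (mooreDet : Matrix (Fin n) (Fin n) ℍ[ℝ] → ℍ[ℝ]) := by
  unfold mooreDet
  refine continuous_finsetSum _ fun σ _ => continuous_const.mul ?_
  refine continuous_list_prod _ fun m _ => continuous_list_prod _ fun t _ => ?_
  fun_prop

lemma re_star_mul_self (q : ℍ[ℝ]) : (star q * q).re = Quaternion.normSq q := by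
  rw [Quaternion.star_mul_self, Quaternion.re_coe]

/-- The Hermitian form of `A * Aᴴ + t` at `v` is `|Aᴴ v|² + t |v|²`. -/
lemma perturbed_pos (A : Matrix (Fin n) (Fin n) ℍ[ℝ]) {t : ℝ} (ht : 0 < t) (v : Fin n → ℍ[ℝ])
    (hv : v ≠ 0) :
    0 < (∑ a, star (v a) *
      ∑ b, (A * Aᴴ + Matrix.diagonal fun _ => (t : ℍ[ℝ]) :
      Matrix (Fin n) (Fin n) ℍ[ℝ]) a b * v b).re := by
  have h1 : ∑ a, star (v a) * ∑ b, (A * Aᴴ + Matrix.diagonal fun _ => (t : ℍ[ℝ]) :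
      Matrix (Fin n) (Fin n) ℍ[ℝ]) a b * v b
      = star (Aᴴ *ᵥ v) ⬝ᵥ (Aᴴ *ᵥ v) + ∑ a, (t : ℍ[ℝ]) * (star (v a) * v a) := by
    have h2 : star (Aᴴ *ᵥ v) ⬝ᵥ (Aᴴ *ᵥ v) = star v ⬝ᵥ ((A * Aᴴ) *ᵥ v) := by
      rw [Matrix.star_mulVec, Matrix.conjTranspose_conjTranspose, ← Matrix.mulVec_mulVec,
        Matrix.dotProduct_mulVec (star v)]
    rw [h2, dotProduct, ← Finset.sum_add_distrib]
    refine Finset.sum_congr rfl fun a _ => ?_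
    rw [← mul_assoc, Quaternion.coe_commutes, mul_assoc, Pi.star_apply, ← mul_add]
    congr 1
    simp only [Matrix.add_apply, add_mul, Finset.sum_add_distrib]
    congr 1
    simp [Matrix.diagonal_apply]
  rw [h1, Quaternion.re_add, dotProduct, re_sum_quaternion, re_sum_quaternion]
  have h3 : ∀ a, ((t : ℍ[ℝ]) * (star (v a) * v a)).re = t * Quaternion.normSq (v a) := by
    intro a
    rw [Quaternion.star_mul_self, ← Quaternion.coe_mul, Quaternion.re_coe]
  simp only [Pi.star_apply, re_star_mul_self, h3]
  obtain ⟨a, ha⟩ := Function.ne_iff.1 hv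
  refine add_pos_of_nonneg_of_pos (Finset.sum_nonneg fun _ _ => Quaternion.normSq_nonneg) ?_
  refine Finset.sum_pos' (fun _ _ => mul_nonneg ht.le Quaternion.normSq_nonneg)
    ⟨a, Finset.mem_univ _, mul_pos ht ?_⟩
  exact lt_of_le_of_ne Quaternion.normSq_nonneg
    (fun h => ha (Quaternion.normSq_eq_zero.1 h.symm))

/-- `A * Aᴴ` is only positive semidefinite; it is the limit of `A * Aᴴ + t` as `t → 0⁺`. -/
lemma mul_conjTranspose_limit (A : Matrix (Fin n) (Fin n) ℍ[ℝ]) :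
    0 ≤ (mooreDet (A * Aᴴ)).re ∧
      studyDet (A * Aᴴ) = (((mooreDet (A * Aᴴ)).re ^ 2 : ℝ) : ℂ) := by
  let E : ℝ → Matrix (Fin n) (Fin n) ℍ[ℝ] := fun t => A * Aᴴ + Matrix.diagonal fun _ => (t : ℍ[ℝ])
  have hE : Continuous E := by
    refine continuous_const.add (Continuous.matrix_diagonal ?_)
    exact continuous_pi fun _ => Quaternion.continuous_coe
  have hE0 : E 0 = A * Aᴴ := by simp [E]
  have key : ∀ t : ℝ, 0 < t →
      0 ≤ (mooreDet (E t)).re ∧ studyDet (E t) = (((mooreDet (E t)).re ^ 2 : ℝ) : ℂ) := by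
    intro t ht
    refine studyDet_eq_sq (fun i j => ?_) fun v hv => perturbed_pos A ht v hv
    have hherm : (E t)ᴴ = E t := by
      simp only [E, Matrix.conjTranspose_add, Matrix.conjTranspose_mul,
        Matrix.conjTranspose_conjTranspose, Matrix.diagonal_conjTranspose]
      congr 2
      ext1 i
      simp
    rw [← Matrix.conjTranspose_apply, hherm]
  have hre : Continuous fun t => (mooreDet (E t)).re :=
    Quaternion.continuous_re.comp (continuous_mooreDet.comp hE)
  have hmem : (0 : ℝ) ∈ closure (Set.Ioi 0) := by simp
  rw [← hE0]
  have hcl : IsClosed {t : ℝ | 0 ≤ (mooreDet (E t)).re ∧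
      studyDet (E t) = (((mooreDet (E t)).re ^ 2 : ℝ) : ℂ)} :=
    (isClosed_le continuous_const hre).inter
      (isClosed_eq (continuous_studyDet.comp hE)
        (Complex.continuous_ofReal.comp (hre.pow 2)))
  exact (closure_minimal (fun t ht => key t ht) hcl) hmem

end Compare


/-- The Study determinant equals the Moore determinant of `A A*`:
`S(A) = M(A A*)`; in particular `S(A) = det θ_n(A)` is real. -/
theorem study_eq_moore {n : ℕ} (A : Matrix (Fin n) (Fin n) ℍ[ℝ]) :
    ∃ r : ℝ, studyDet A = (r : ℂ) ∧ mooreDet (A * Aᴴ) = (r : ℍ[ℝ]) := by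
  have hH : ∀ i j, star ((A * Aᴴ) i j) = (A * Aᴴ) j i := fun i j => by
    rw [← Matrix.conjTranspose_apply, Matrix.conjTranspose_mul,
      Matrix.conjTranspose_conjTranspose]
  obtain ⟨h0, hsq⟩ := mul_conjTranspose_limit A
  have hreal : mooreDet (A * Aᴴ) = ((mooreDet (A * Aᴴ)).re : ℍ[ℝ]) := by
    rw [mooreDet_eq_mooreOn]
    exact mooreOn_coe_re hH _
  refine ⟨_, ?_, hreal⟩
  obtain ⟨s, hs0, hs⟩ := RCLike.nonneg_iff_exists_ofReal.1 (studyDet_nonneg A)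
  rw [studyDet_mul, studyDet_conjTranspose, ← hs] at hsq
  have h1 : s * s = (mooreDet (A * Aᴴ)).re ^ 2 := by
    apply Complex.ofReal_injective
    rw [← hsq]
    simp
  have h2 : s = (mooreDet (A * Aᴴ)).re := by
    rw [← sq] at h1
    exact (pow_left_inj₀ hs0 h0 two_ne_zero).1 h1
  rw [← hs, ← h2]
  rfl
end
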